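/- arXiv:2109.00970 — 2 statements merged into one kernel-verified Lean document; each statement's English description precedes it below -/
import Mathlib

section
/- Let p_1,...,p_k be primes, m_α ≥ 2, λ a positive integer divisible by each p_α, and let permutations π_α of {1,...,m_α−1} and constants c_{α,β}, c_α ∈ Z_λ be given. Define f_α : Z_{p_α}^{m_α−1} → Z_λ by f_α = (λ/p_α)·Σ_{β=1}^{m_α−2} v_{p_α,π_α(β)} v_{p_α,π_α(β+1)} + Σ_{β=1}^{m_α−1} c_{α,β} v_{p_α,β} + c_α, and f = f_1 + ··· + f_k. For γ, t ∈ ∏_α Z_{p_α}, define R_t^γ = f + Σ_α (λ/p_α)·v_{p_α,π_α(1)}·γ_α + Σ_α (λ/p_α)·v_{p_α,π_α(m_α−1)}·t_α on ∏_α Z_{p_α}^{m_α−1}, and let ψ(R_t^γ) be the corresponding complex sequence of length N = ∏_α p_α^{m_α−1}. Then for t_1, t_2 ∈ ∏_α Z_{p_α}: Σ_{γ ∈ ∏_α Z_{p_α}} C(ψ(R_{t_1}^γ), ψ(R_{t_2}^γ))(τ) equals ∏_α p_α^{m_α} if t_1 = t_2 and τ = 0; equals 0 if t_1 = t_2 and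 0 < |τ| < N; and equals 0 if t_1 ≠ t_2 and |τ| < N. -/
/-!
Write the summed correlation as a sum, over all triples `(γ, i, j)` with `j - i = τ`, of
`χ (R_{t1}^γ i - R_{t2}^γ j)`, where `χ` is the standard additive character of `ZMod lam`.
Apart from the trivial case `t1 = t2`, `τ = 0`, this sum cancels along orbits of cyclic shifts,
and the shift to use depends only on the set of positions where the digits of `i` and `j` agree.

* If, in some block `α`, the digits at `π α 0` differ, shift `γ α`.
* Otherwise, if `i ≠ j`, some block `α` has a first position `b + 1` along the path
  `π α 0, π α 1, …` at which the digits differ. Shift the digit at `π α b` of both `i` and `j`.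
  These digits agree, so `j - i` does not change, and the phase changes by `lam / p α` times the
  difference of the digits at `π α (b + 1)`; all other terms involving the shifted digit cancel.
* If `i = j`, then `τ = 0` and `t1 α ≠ t2 α` for some `α`. Shift the digit at `π α (m α - 2)`;
  the phase changes by `lam / p α * (t1 α - t2 α)`.

In each case the weight is multiplied by a factor `≠ 1` which is constant along orbits and the
pattern of agreement is preserved, so `sum_eq_zero_of_twist` applies. The digit shifts are studied
in `shiftN_sub` and `dig_shiftN_ne`, and their effect on the phase in `blk_shift`.
-/

open Finset

/-- Aperiodic cross-correlation function (ACCF) of two length-`L` complex sequences. -/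
noncomputable def accf (L : ℕ) (a b : ℕ → ℂ) (τ : ℤ) : ℂ :=
  if 0 ≤ τ ∧ τ < (L : ℤ) then
    ∑ i ∈ range (L - τ.toNat), a i * (starRingEnd ℂ) (b (i + τ.toNat))
  else if -(L : ℤ) < τ ∧ τ ≤ -1 then
    ∑ i ∈ range (L - (-τ).toNat), a (i + (-τ).toNat) * (starRingEnd ℂ) (b i)
  else 0

/-- The `β`-th base-`p α` digit of the `α`-th mixed-radix block of `j`, where the
`α`-th block has size `p α ^ (m α - 1)` and earlier blocks vary faster. This realizes
the lexicographic enumeration of `∏_α Z_{p_α}^{m_α-1}`: `dig p m j α β = v_{p_α,β+1}`. -/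
def dig {k : ℕ} (p m : Fin k → ℕ) (j : ℕ) (α : Fin k) (β : ℕ) : ℕ :=
  (j / ∏ α' ∈ Finset.univ.filter (fun α' => α' < α), p α' ^ (m α' - 1)) %
      (p α ^ (m α - 1)) / p α ^ β % p α

/-- The `α`-th coordinate of `j` in the mixed-radix enumeration of `∏_α Z_{p_α}`. -/
def odig {k : ℕ} (p : Fin k → ℕ) (j : ℕ) (α : Fin k) : ℕ :=
  (j / ∏ α' ∈ Finset.univ.filter (fun α' => α' < α), p α') % p α

/-- The multivariable function `f = f_1 + ⋯ + f_k`, where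
`f_α = (λ/p_α)·Σ_β v_{π_α(β)} v_{π_α(β+1)} + Σ_β c_{α,β} v_β + c_α`
(indices `0`-based, `π α` a bijection of `{0,…,m_α-2}`). -/
def fFun {k : ℕ} (p m : Fin k → ℕ) (lam : ℕ) (π : Fin k → ℕ → ℕ)
    (c : Fin k → ℕ → ZMod lam) (c' : Fin k → ZMod lam) (j : ℕ) : ZMod lam :=
  ∑ α, (((lam / p α : ℕ) : ZMod lam) *
        ∑ β ∈ range (m α - 2),
          (dig p m j α (π α β) : ZMod lam) * (dig p m j α (π α (β + 1)) : ZMod lam)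
      + ∑ β ∈ range (m α - 1), c α β * (dig p m j α β : ZMod lam) + c' α)

/-- The function `R_t^γ = f + Σ_α (λ/p_α) v_{π_α(1)} γ_α + Σ_α (λ/p_α) v_{π_α(m_α-1)} t_α`. -/
def RFun {k : ℕ} (p m : Fin k → ℕ) (lam : ℕ) (π : Fin k → ℕ → ℕ)
    (c : Fin k → ℕ → ZMod lam) (c' : Fin k → ZMod lam)
    (γ t : ∀ α, Fin (p α)) (j : ℕ) : ZMod lam :=
  fFun p m lam π c c' j
    + ∑ α, ((lam / p α : ℕ) : ZMod lam) * (dig p m j α (π α 0) : ZMod lam) * ((γ α : ℕ) : ZMod lam)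
    + ∑ α, ((lam / p α : ℕ) : ZMod lam) * (dig p m j α (π α (m α - 2)) : ZMod lam) *
        ((t α : ℕ) : ZMod lam)

/-- The function `a_{s,t}^γ = R_t^γ + T_s` on `∏_α Z_{p_α}^{m_α-1} × ∏_α Z_{p_α}`,
with the `∏_α Z_{p_α}` coordinates varying slowest (outer index). -/
def aFun {k : ℕ} (p m : Fin k → ℕ) (lam : ℕ) (π : Fin k → ℕ → ℕ)
    (c : Fin k → ℕ → ZMod lam) (c' : Fin k → ZMod lam)
    (s t γ : ∀ α, Fin (p α)) (j : ℕ) : ZMod lam :=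
  RFun p m lam π c c' γ t (j % ∏ α, p α ^ (m α - 1))
    + ∑ α, ((lam / p α : ℕ) : ZMod lam) *
        (odig p (j / ∏ α', p α' ^ (m α' - 1)) α : ZMod lam) * ((s α : ℕ) : ZMod lam)

/-- The complex sequence `ψ(g) = ω_λ^{g(·)}` associated to a `ZMod λ`-valued function. -/
noncomputable def seqC (lam : ℕ) (g : ℕ → ZMod lam) : ℕ → ℂ :=
  fun j => Complex.exp (2 * Real.pi * Complex.I * ((g j).val : ℂ) / (lam : ℂ))

/-! ### Mixed-radix digits and digit shifts -/

/-- Cyclic shift `a ↦ a + 1` of a base-`n` digit. -/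
def digitSucc {n : ℕ} (a : Fin n) : Fin n := ⟨(a.val + 1) % n, Nat.mod_lt _ a.pos⟩

lemma digitSucc_injective {n : ℕ} : Function.Injective (digitSucc (n := n)) := by
  intro a b h
  have h1 : (a.val + 1) % n = (b.val + 1) % n := congrArg Fin.val h
  have h2 : a.val ≡ b.val [MOD n] := Nat.ModEq.add_right_cancel' 1 h1
  exact Fin.ext (Nat.ModEq.eq_of_lt_of_lt h2 a.2 b.2)

/-- The mixed-radix enumeration: digit arrays correspond to numbers below
`∏ α, p α ^ (m α - 1)`. -/
def digitEquiv {k : ℕ} (p m : Fin k → ℕ) :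
    (∀ α, Fin (m α - 1) → Fin (p α)) ≃ Fin (∏ α, p α ^ (m α - 1)) :=
  (Equiv.piCongrRight fun _ => finFunctionFinEquiv).trans finPiFinEquiv

lemma prod_castLE_eq {k : ℕ} (n : Fin k → ℕ) (α : Fin k) :
    ∏ j : Fin α, n (Fin.castLE α.is_lt.le j) =
      ∏ α' ∈ Finset.univ.filter (fun α' => α' < α), n α' := by
  refine Finset.prod_bij (fun j _ => Fin.castLE α.is_lt.le j) ?_ ?_ ?_ ?_
  · intro j _
    simp only [Finset.mem_filter, Finset.mem_univ, true_and]
    exact j.2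
  · intro a _ b _ h
    simpa [Fin.ext_iff] using h
  · intro b hb
    simp only [Finset.mem_filter, Finset.mem_univ, true_and] at hb
    exact ⟨⟨b.val, hb⟩, Finset.mem_univ _, rfl⟩
  · intro a _
    rfl

lemma digitEquiv_symm_val {k : ℕ} (p m : Fin k → ℕ) (i : Fin (∏ α, p α ^ (m α - 1)))
    (α : Fin k) (β : Fin (m α - 1)) :
    (((digitEquiv p m).symm i α β : Fin (p α)) : ℕ) = dig p m i α β := by
  unfold dig
  rw [← prod_castLE_eq (fun α' => p α' ^ (m α' - 1))]
  rfl

lemma dig_digitEquiv {k : ℕ} (p m : Fin k → ℕ) (v : ∀ α, Fin (m α - 1) → Fin (p α))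
    (α : Fin k) (β : Fin (m α - 1)) :
    dig p m (digitEquiv p m v) α β = v α β := by
  rw [← digitEquiv_symm_val, Equiv.symm_apply_apply]

lemma dig_eq_zero {k : ℕ} (p m : Fin k → ℕ) (j : ℕ) (α : Fin k) (β : ℕ) (hp : 0 < p α)
    (hβ : m α - 1 ≤ β) : dig p m j α β = 0 := by
  unfold dig
  rw [Nat.div_eq_of_lt, Nat.zero_mod]
  exact (Nat.mod_lt _ (pow_pos hp _)).trans_le (Nat.pow_le_pow_right hp hβ)

lemma digitEquiv_val {k : ℕ} (p m : Fin k → ℕ) (v : ∀ α, Fin (m α - 1) → Fin (p α)) :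
    ((digitEquiv p m v : Fin _) : ℕ) =
      ∑ α, (∑ β, (v α β : ℕ) * p α ^ (β : ℕ)) *
        ∏ j : Fin α, (p (Fin.castLE α.is_lt.le j)) ^ (m (Fin.castLE α.is_lt.le j) - 1) := rfl

/-- Cyclically increase the digit at position `(α, b)`. -/
def shiftV {k : ℕ} (p m : Fin k → ℕ) (α : Fin k) (b : Fin (m α - 1))
    (v : ∀ α, Fin (m α - 1) → Fin (p α)) : ∀ α, Fin (m α - 1) → Fin (p α) :=
  Function.update v α (Function.update (v α) b (digitSucc (v α b)))

lemma shiftV_same {k : ℕ} (p m : Fin k → ℕ) (α : Fin k) (b : Fin (m α - 1))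
    (v : ∀ α, Fin (m α - 1) → Fin (p α)) : shiftV p m α b v α b = digitSucc (v α b) := by
  simp [shiftV]

lemma shiftV_ne {k : ℕ} (p m : Fin k → ℕ) (α : Fin k) (b : Fin (m α - 1))
    (v : ∀ α, Fin (m α - 1) → Fin (p α)) (α' : Fin k) (β : Fin (m α' - 1))
    (h : ¬ (α' = α ∧ (β : ℕ) = b)) : shiftV p m α b v α' β = v α' β := by
  unfold shiftV
  by_cases hα : α' = α
  · subst hα
    have : β ≠ b := fun hb => h ⟨rfl, congrArg Fin.val hb⟩
    simp [this]
  · simp [hα]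

lemma shiftV_injective {k : ℕ} (p m : Fin k → ℕ) (α : Fin k) (b : Fin (m α - 1)) :
    Function.Injective (shiftV p m α b) := by
  intro v w h
  funext α' β
  have h1 := congrFun (congrFun h α') β
  by_cases hh : α' = α ∧ (β : ℕ) = b
  · obtain ⟨rfl, hb⟩ := hh
    obtain rfl := Fin.ext hb
    rw [shiftV_same, shiftV_same] at h1
    exact digitSucc_injective h1
  · rwa [shiftV_ne _ _ _ _ _ _ _ hh, shiftV_ne _ _ _ _ _ _ _ hh] at h1

/-- The digit shift transported to numbers below `∏ α, p α ^ (m α - 1)`. -/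
def shiftN {k : ℕ} (p m : Fin k → ℕ) (α : Fin k) (b : Fin (m α - 1))
    (i : Fin (∏ α, p α ^ (m α - 1))) : Fin (∏ α, p α ^ (m α - 1)) :=
  digitEquiv p m (shiftV p m α b ((digitEquiv p m).symm i))

lemma shiftN_injective {k : ℕ} (p m : Fin k → ℕ) (α : Fin k) (b : Fin (m α - 1)) :
    Function.Injective (shiftN p m α b) :=
  (digitEquiv p m).injective.comp
    ((shiftV_injective p m α b).comp (digitEquiv p m).symm.injective)

lemma dig_shiftN_same {k : ℕ} (p m : Fin k → ℕ) (α : Fin k) (b : Fin (m α - 1))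
    (i : Fin (∏ α, p α ^ (m α - 1))) :
    dig p m (shiftN p m α b i) α b = (dig p m i α b + 1) % p α := by
  unfold shiftN
  rw [dig_digitEquiv, shiftV_same, ← digitEquiv_symm_val]
  rfl

lemma dig_shiftN_ne {k : ℕ} (p m : Fin k → ℕ) (hp : ∀ α, 0 < p α) (α : Fin k)
    (b : Fin (m α - 1)) (i : Fin (∏ α, p α ^ (m α - 1))) (α' : Fin k) (β : ℕ)
    (h : ¬ (α' = α ∧ β = b)) :
    dig p m (shiftN p m α b i) α' β = dig p m i α' β := by
  by_cases hβ : β < m α' - 1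
  · have h1 := dig_digitEquiv p m (shiftV p m α b ((digitEquiv p m).symm i)) α' ⟨β, hβ⟩
    have h2 := digitEquiv_symm_val p m i α' ⟨β, hβ⟩
    rw [shiftV_ne _ _ _ _ _ _ _ h] at h1
    exact h1.trans h2
  · rw [dig_eq_zero _ _ _ _ _ (hp _) (not_lt.1 hβ), dig_eq_zero _ _ _ _ _ (hp _) (not_lt.1 hβ)]

/-- Shifting a digit in which `i` and `j` agree changes both numbers by the same amount (with or
without wrap-around), so the lag `j - i` is preserved. -/
lemma shiftN_sub {k : ℕ} (p m : Fin k → ℕ) (α : Fin k) (b : Fin (m α - 1))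
    (i j : Fin (∏ α, p α ^ (m α - 1))) (h : dig p m i α b = dig p m j α b) :
    ((shiftN p m α b j : ℕ) : ℤ) - (shiftN p m α b i : ℕ) = (j : ℕ) - (i : ℕ) := by
  obtain ⟨v, rfl⟩ := (digitEquiv p m).surjective i
  obtain ⟨w, rfl⟩ := (digitEquiv p m).surjective j
  rw [dig_digitEquiv, dig_digitEquiv] at h
  unfold shiftN
  simp only [Equiv.symm_apply_apply]
  rw [digitEquiv_val, digitEquiv_val, digitEquiv_val, digitEquiv_val]
  push_cast
  rw [← Finset.sum_sub_distrib, ← Finset.sum_sub_distrib]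
  refine Finset.sum_congr rfl fun α' _ => ?_
  rw [← sub_mul, ← sub_mul, ← Finset.sum_sub_distrib, ← Finset.sum_sub_distrib]
  congr 1
  refine Finset.sum_congr rfl fun β _ => ?_
  by_cases hh : α' = α ∧ (β : ℕ) = b
  · obtain ⟨rfl, hb⟩ := hh
    obtain rfl := Fin.ext hb
    have h' := Fin.ext h
    rw [shiftV_same, shiftV_same, h']
    simp
  · rw [shiftV_ne _ _ _ _ _ _ _ hh, shiftV_ne _ _ _ _ _ _ _ hh]

lemma eq_of_dig_eq {k : ℕ} (p m : Fin k → ℕ) (i j : Fin (∏ α, p α ^ (m α - 1)))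
    (h : ∀ α, ∀ β < m α - 1, dig p m i α β = dig p m j α β) : i = j := by
  apply (digitEquiv p m).symm.injective
  funext α β
  apply Fin.ext
  rw [digitEquiv_symm_val, digitEquiv_symm_val]
  exact h α β β.2

/-! ### Cancellation along orbits -/

/-- A twisted orbit argument. The type `T` is partitioned by `pat`, and each part carries an
injective self-map which multiplies the weight `W` by a factor `U ≠ 1` constant along orbits.
Then `W = U * W / (U - 1) - W / (U - 1)` is a coboundary, so the weights sum to zero. -/
lemma sum_eq_zero_of_twist {T D : Type*} [Fintype T] (W : T → ℂ) (pat : T → D)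
    (h : ∀ d, ∃ sh : T → T, ∃ U : T → ℂ, Function.Injective sh ∧
      ∀ x, pat x = d →
        pat (sh x) = d ∧ U (sh x) = U x ∧ U x ≠ 1 ∧ W (sh x) = U x * W x) :
    ∑ x, W x = 0 := by
  choose sh U hinj hx using h
  have hbij : Function.Bijective (fun x => sh (pat x) x) := by
    refine Finite.injective_iff_bijective.1 fun x y hxy => ?_
    have hp : pat x = pat y := by
      rw [← (hx _ x rfl).1, ← (hx _ y rfl).1]
      exact congrArg pat hxy
    apply hinj (pat x)
    simpa [hp] using hxy
  have key := hbij.sum_comp (fun x => W x / (U (pat x) x - 1))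
  rw [← sub_eq_zero, ← Finset.sum_sub_distrib] at key
  rw [← key]
  refine Finset.sum_congr rfl fun x _ => ?_
  obtain ⟨h1, h2, h3, h4⟩ := hx _ x rfl
  have h5 : U (pat x) x - 1 ≠ 0 := sub_ne_zero.2 h3
  simp only [h1, h2, h4]
  field_simp

/-! ### Aperiodic correlation as a sum over pairs -/

lemma sum_sum_ite_eq (N n : ℕ) (f : ℕ → ℕ → ℂ) :
    ∑ i ∈ range N, ∑ j ∈ range N, (if j = i + n then f i j else 0) =
      ∑ i ∈ range (N - n), f i (i + n) := by
  have h1 : ∀ i, ∑ j ∈ range N, (if j = i + n then f i j else 0) =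
      if i < N - n then f i (i + n) else 0 := by
    intro i
    rw [Finset.sum_ite_eq']
    have : i + n < N ↔ i < N - n := by omega
    simp [this]
  simp_rw [h1]
  rw [← Finset.sum_filter]
  refine Finset.sum_congr ?_ fun _ _ => rfl
  ext i
  simp only [Finset.mem_filter, Finset.mem_range]
  omega

/-- The aperiodic correlation as a sum over all pairs of positions with lag `τ`. -/
lemma accf_eq (N : ℕ) (a b : ℕ → ℂ) (τ : ℤ) (hτ : |τ| < (N : ℤ)) :
    accf N a b τ = ∑ i : Fin N, ∑ j : Fin N,
      if ((j : ℕ) : ℤ) = (i : ℕ) + τ then a i * (starRingEnd ℂ) (b j) else 0 := by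
  have hab := abs_lt.1 hτ
  rw [Fin.sum_univ_eq_sum_range (fun i => ∑ j : Fin N,
      if ((j : ℕ) : ℤ) = (i : ℕ) + τ then a i * (starRingEnd ℂ) (b j) else 0)]
  simp_rw [fun i : ℕ => Fin.sum_univ_eq_sum_range (fun j =>
      if (j : ℤ) = (i : ℕ) + τ then a i * (starRingEnd ℂ) (b j) else 0) N]
  unfold accf
  rcases le_or_gt 0 τ with h0 | h0
  · obtain ⟨n, rfl⟩ := Int.eq_ofNat_of_zero_le h0
    rw [if_pos ⟨h0, hab.2⟩]
    simp only [Int.toNat_natCast]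
    rw [← sum_sum_ite_eq N n (fun i j => a i * (starRingEnd ℂ) (b j))]
    norm_cast
  · obtain ⟨n, hn⟩ := Int.eq_ofNat_of_zero_le (neg_nonneg.2 h0.le)
    obtain rfl : τ = -(n : ℤ) := by omega
    rw [if_neg (by omega), if_pos ⟨hab.1, by omega⟩, neg_neg, Int.toNat_natCast,
      ← sum_sum_ite_eq N n (fun j i => a i * (starRingEnd ℂ) (b j)), Finset.sum_comm]
    refine Finset.sum_congr rfl fun i _ => Finset.sum_congr rfl fun j _ => ?_
    refine if_congr ?_ rfl rfl
    omega

/-! ### Effect of a shift on the phase -/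

/-- The contribution of a single block to `RFun`, as a function of the digits of that block. -/
def blk {A : Type*} [CommRing A] (q : A) (m : ℕ) (π : ℕ → ℕ) (c : ℕ → A) (c0 : A) (g t : ℕ)
    (x : ℕ → ℕ) : A :=
  q * ∑ β ∈ range (m - 2), (x (π β) : A) * (x (π (β + 1)) : A)
    + ∑ β ∈ range (m - 1), c β * (x β : A) + c0
    + q * (x (π 0) : A) * (g : A) + q * (x (π (m - 2)) : A) * (t : A)

lemma RFun_eq {k : ℕ} (p m : Fin k → ℕ) (lam : ℕ) (π : Fin k → ℕ → ℕ)
    (c : Fin k → ℕ → ZMod lam) (c' : Fin k → ZMod lam) (γ t : ∀ α, Fin (p α)) (j : ℕ) :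
    RFun p m lam π c c' γ t j =
      ∑ α, blk ((lam / p α : ℕ) : ZMod lam) (m α) (π α) (c α) (c' α) (γ α) (t α)
        (dig p m j α) := by
  unfold RFun fFun blk
  rw [← Finset.sum_add_distrib, ← Finset.sum_add_distrib]

/-- Shifting the digit at `π b` in two digit strings which agree at `π 0, …, π b` changes the
difference of the block values only through the product of the digits at `π b` and `π (b + 1)`,
or, at the end of the path `b = m - 2`, only through the `t`-term. -/
lemma blk_shift {A : Type*} [CommRing A] (q : A) (m : ℕ) (hm : 2 ≤ m) (π : ℕ → ℕ)
    (hπ : Set.BijOn π (Set.Iio (m - 1)) (Set.Iio (m - 1))) (c : ℕ → A) (c0 : A) (g t1 t2 : ℕ)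
    (x y x' y' : ℕ → ℕ) (b : ℕ) (hb : b < m - 1)
    (hx : ∀ β, β ≠ π b → x' β = x β) (hy : ∀ β, β ≠ π b → y' β = y β)
    (hxy' : x' (π b) = y' (π b)) (hq : q * (x' (π b) : A) = q * (x (π b) + 1))
    (heq : ∀ b' ≤ b, x (π b') = y (π b')) :
    blk q m π c c0 g t1 x' - blk q m π c c0 g t2 y' =
      blk q m π c c0 g t1 x - blk q m π c c0 g t2 y +
        q * (if b = m - 2 then (t1 : A) - t2 else (x (π (b + 1)) : A) - y (π (b + 1))) := by
  have hne : ∀ b' < m - 1, b' ≠ b → π b' ≠ π b := fun b' hb' hbb h => hbb (hπ.injOn hb' hb h)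
  have hxy := heq b le_rfl
  have hlin : ∑ β ∈ range (m - 1), c β * (x' β : A) - ∑ β ∈ range (m - 1), c β * (y' β : A) =
      ∑ β ∈ range (m - 1), c β * (x β : A) - ∑ β ∈ range (m - 1), c β * (y β : A) := by
    rw [← Finset.sum_sub_distrib, ← Finset.sum_sub_distrib]
    refine Finset.sum_congr rfl fun β _ => ?_
    by_cases hβ : β = π b
    · rw [hβ, hxy, hxy']
      ring
    · rw [hx β hβ, hy β hβ]
  have h0 : q * (x' (π 0) : A) * (g : A) - q * (y' (π 0) : A) * (g : A) =
      q * (x (π 0) : A) * (g : A) - q * (y (π 0) : A) * (g : A) := by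
    by_cases hb0 : b = 0
    · subst hb0
      rw [hxy, hxy']
      ring
    · have := hne 0 (by omega) (Ne.symm hb0)
      rw [hx _ this, hy _ this]
  have hquad : q * ∑ β ∈ range (m - 2), (x' (π β) : A) * (x' (π (β + 1)) : A)
        - q * ∑ β ∈ range (m - 2), (y' (π β) : A) * (y' (π (β + 1)) : A) =
      q * ∑ β ∈ range (m - 2), (x (π β) : A) * (x (π (β + 1)) : A)
        - q * ∑ β ∈ range (m - 2), (y (π β) : A) * (y (π (β + 1)) : A)
        + if b < m - 2 then q * ((x (π (b + 1)) : A) - y (π (b + 1))) else 0 := by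
    rw [← sub_eq_iff_eq_add']
    simp only [Finset.mul_sum]
    rw [← Finset.sum_sub_distrib, ← Finset.sum_sub_distrib, ← Finset.sum_sub_distrib]
    rw [show (if b < m - 2 then q * ((x (π (b + 1)) : A) - y (π (b + 1))) else 0) =
      ∑ β ∈ range (m - 2), if β = b then q * ((x (π (β + 1)) : A) - y (π (β + 1))) else 0 by
        rw [Finset.sum_ite_eq']
        simp]
    refine Finset.sum_congr rfl fun β hβ => ?_
    rw [Finset.mem_range] at hβ
    by_cases h1 : β = b
    · subst h1
      have h2 := hne (β + 1) (by omega) (by omega)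
      rw [if_pos rfl, hx _ h2, hy _ h2, ← hxy', ← hxy]
      linear_combination ((x (π (β + 1)) : A) - y (π (β + 1))) * hq
    · rw [if_neg h1]
      have h2 := hne β (by omega) h1
      rw [hx _ h2, hy _ h2]
      by_cases h3 : β + 1 = b
      · rw [h3, hxy', hxy, heq β (by omega)]
        ring
      · have h4 := hne (β + 1) (by omega) h3
        rw [hx _ h4, hy _ h4]
        ring
  have ht : q * (x' (π (m - 2)) : A) * (t1 : A) - q * (y' (π (m - 2)) : A) * (t2 : A) =
      q * (x (π (m - 2)) : A) * (t1 : A) - q * (y (π (m - 2)) : A) * (t2 : A)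
        + if b = m - 2 then q * ((t1 : A) - t2) else 0 := by
    by_cases h1 : b = m - 2
    · subst h1
      rw [if_pos rfl, ← hxy', ← hxy]
      linear_combination ((t1 : A) - t2) * hq
    · have h2 := hne (m - 2) (by omega) (Ne.symm h1)
      rw [if_neg h1, hx _ h2, hy _ h2, add_zero]
  unfold blk
  by_cases h1 : b = m - 2
  · rw [if_neg (by omega)] at hquad
    rw [if_pos h1] at ht ⊢
    linear_combination hlin + h0 + hquad + ht
  · rw [if_pos (by omega)] at hquad
    rw [if_neg h1] at ht ⊢
    linear_combination hlin + h0 + hquad + ht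

lemma cast_div_mul_mod (lam p : ℕ) (h : p ∣ lam) (a : ℕ) :
    ((lam / p : ℕ) : ZMod lam) * ((a % p : ℕ) : ZMod lam) =
      ((lam / p : ℕ) : ZMod lam) * (a : ZMod lam) := by
  have h1 : ((lam / p : ℕ) : ZMod lam) * (p : ZMod lam) = 0 := by
    rw [← Nat.cast_mul, Nat.div_mul_cancel h, ZMod.natCast_self]
  have h2 : ((p * (a / p) + a % p : ℕ) : ZMod lam) = (a : ZMod lam) := by rw [Nat.div_add_mod]
  rw [← h2]
  push_cast
  linear_combination (-((a / p : ℕ) : ZMod lam)) * h1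

lemma cast_div_mul_sub_ne_zero (lam p : ℕ) (hlam : 0 < lam) (h : p ∣ lam) (a b : ℕ)
    (ha : a < p) (hb : b < p) (hab : a ≠ b) :
    ((lam / p : ℕ) : ZMod lam) * ((a : ZMod lam) - b) ≠ 0 := by
  intro h0
  have h1 : (((lam / p : ℕ) * ((a : ℤ) - b) : ℤ) : ZMod lam) = 0 := by
    rw [Int.cast_mul, Int.cast_sub, Int.cast_natCast, Int.cast_natCast, Int.cast_natCast]
    exact h0
  rw [ZMod.intCast_zmod_eq_zero_iff_dvd _ lam] at h1
  have h2 : (lam : ℤ) = ((lam / p : ℕ) : ℤ) * p := by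
    exact_mod_cast (Nat.div_mul_cancel h).symm
  have h3 : ((lam / p : ℕ) : ℤ) ≠ 0 := by
    intro h3
    rw [h3] at h2
    omega
  rw [h2] at h1
  have h4 := Int.dvd_of_mul_dvd_mul_left h3 h1
  have h5 := Int.eq_zero_of_abs_lt_dvd h4 (by rw [abs_lt]; omega)
  omega

/-! ### Vanishing of the summed correlation -/

lemma seqC_eq (lam : ℕ) [NeZero lam] (g : ℕ → ZMod lam) (j : ℕ) :
    seqC lam g j = ZMod.stdAddChar (g j) := by
  rw [ZMod.stdAddChar_apply, ZMod.toCircle_apply]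
  rfl

lemma seqC_mul_conj (lam : ℕ) [NeZero lam] (g h : ℕ → ZMod lam) (i j : ℕ) :
    seqC lam g i * (starRingEnd ℂ) (seqC lam h j) = ZMod.stdAddChar (g i - h j) := by
  rw [seqC_eq, seqC_eq, ← AddChar.map_neg_eq_conj, ← AddChar.map_add_eq_mul, sub_eq_add_neg]

lemma stdAddChar_ne_one (lam : ℕ) [NeZero lam] (z : ZMod lam) (hz : z ≠ 0) :
    (ZMod.stdAddChar z : ℂ) ≠ 1 := by
  intro h
  rw [← AddChar.map_zero_eq_one (ZMod.stdAddChar (N := lam))] at h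
  exact hz (ZMod.injective_stdAddChar h)

lemma dig_lt {k : ℕ} (p m : Fin k → ℕ) (hp : ∀ α, 0 < p α) (j : ℕ) (α : Fin k) (β : ℕ) :
    dig p m j α β < p α := Nat.mod_lt _ (hp α)

/-- Two families of block values differing only in block `α`. -/
lemma sum_sub_sum_update {k : ℕ} {A : Type*} [AddCommGroup A] (F G F' G' : Fin k → A)
    (α : Fin k) (δ : A) (hα : F' α - G' α = F α - G α + δ)
    (h : ∀ α', α' ≠ α → F' α' - G' α' = F α' - G α') :
    ∑ α', F' α' - ∑ α', G' α' = ∑ α', F α' - ∑ α', G α' + δ := by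
  rw [← sub_eq_iff_eq_add']
  simp only [← Finset.sum_sub_distrib]
  rw [Finset.sum_eq_single α]
  · rw [hα]
    abel
  · intro b _ hb
    rw [h b hb, sub_self]
  · intro h
    exact absurd (Finset.mem_univ _) h

/-- Shifting the digit at `π α b` of both `i` and `j`, which agree at `π α 0, …, π α b`. -/
lemma RFun_shift {k : ℕ} (p m : Fin k → ℕ) (hp : ∀ α, 0 < p α) (hm : ∀ α, 2 ≤ m α)
    (lam : ℕ) (hdvd : ∀ α, p α ∣ lam) (π : Fin k → ℕ → ℕ)
    (hπ : ∀ α, Set.BijOn (π α) (Set.Iio (m α - 1)) (Set.Iio (m α - 1)))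
    (c : Fin k → ℕ → ZMod lam) (c' : Fin k → ZMod lam) (γ t1 t2 : ∀ α, Fin (p α))
    (i j : Fin (∏ α, p α ^ (m α - 1))) (α : Fin k) (b : ℕ) (hb : b < m α - 1)
    (hπb : π α b < m α - 1)
    (heq : ∀ b' ≤ b, dig p m i α (π α b') = dig p m j α (π α b')) :
    RFun p m lam π c c' γ t1 (shiftN p m α ⟨π α b, hπb⟩ i)
        - RFun p m lam π c c' γ t2 (shiftN p m α ⟨π α b, hπb⟩ j) =
      RFun p m lam π c c' γ t1 i - RFun p m lam π c c' γ t2 j +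
        ((lam / p α : ℕ) : ZMod lam) *
          (if b = m α - 2 then ((t1 α : ℕ) : ZMod lam) - ((t2 α : ℕ) : ZMod lam)
            else (dig p m i α (π α (b + 1)) : ZMod lam) - dig p m j α (π α (b + 1))) := by
  simp only [RFun_eq]
  apply sum_sub_sum_update (α := α)
  · apply blk_shift _ _ (hm α) _ (hπ α) _ _ _ _ _ _ _ _ _ b hb
    · intro β hβ
      exact dig_shiftN_ne p m hp α _ i α β fun h => hβ h.2
    · intro β hβ
      exact dig_shiftN_ne p m hp α _ j α β fun h => hβ h.2
    · have h1 := dig_shiftN_same p m α ⟨π α b, hπb⟩ i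
      have h2 := dig_shiftN_same p m α ⟨π α b, hπb⟩ j
      simp only at h1 h2
      rw [h1, h2, heq b le_rfl]
    · have h1 := dig_shiftN_same p m α ⟨π α b, hπb⟩ i
      simp only at h1
      rw [h1, cast_div_mul_mod _ _ (hdvd α)]
      push_cast
      rfl
    · exact heq
  · intro α' hα'
    have h : ∀ i, dig p m (shiftN p m α ⟨π α b, hπb⟩ i) α' = dig p m i α' := fun i =>
      funext fun β => dig_shiftN_ne p m hp α _ i α' β fun h => hα' h.1
    rw [h, h]

lemma RFun_shift_gamma {k : ℕ} (p m : Fin k → ℕ)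
    (lam : ℕ) (hdvd : ∀ α, p α ∣ lam) (π : Fin k → ℕ → ℕ)
    (c : Fin k → ℕ → ZMod lam) (c' : Fin k → ZMod lam) (γ t1 t2 : ∀ α, Fin (p α))
    (i j : ℕ) (α : Fin k) :
    RFun p m lam π c c' (Function.update γ α (digitSucc (γ α))) t1 i
        - RFun p m lam π c c' (Function.update γ α (digitSucc (γ α))) t2 j =
      RFun p m lam π c c' γ t1 i - RFun p m lam π c c' γ t2 j +
        ((lam / p α : ℕ) : ZMod lam) *
          ((dig p m i α (π α 0) : ZMod lam) - dig p m j α (π α 0)) := by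
  simp only [RFun_eq]
  apply sum_sub_sum_update (α := α)
  · have h := cast_div_mul_mod lam (p α) (hdvd α) ((γ α : ℕ) + 1)
    have h2 : ((Function.update γ α (digitSucc (γ α)) α : Fin (p α)) : ℕ) =
        ((γ α : ℕ) + 1) % p α := by
      rw [Function.update_self]
      rfl
    rw [h2]
    unfold blk
    push_cast at h ⊢
    linear_combination ((dig p m i α (π α 0) : ZMod lam) - dig p m j α (π α 0)) * h
  · intro α' hα'
    rw [Function.update_of_ne hα']

lemma update_digitSucc_injective {k : ℕ} (p : Fin k → ℕ) (α : Fin k) :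
    Function.Injective
      (fun γ : ∀ α, Fin (p α) => Function.update γ α (digitSucc (γ α))) := by
  intro γ γ' h
  funext α'
  have h1 := congrFun h α'
  by_cases hα : α' = α
  · subst hα
    simp only [Function.update_self] at h1
    exact digitSucc_injective h1
  · simpa only [Function.update_of_ne hα] using h1

/-- The correlation sum written over triples `(γ, i, j)` with `j - i = τ`. -/
lemma sum_accf_eq {k : ℕ} (p m : Fin k → ℕ) (lam : ℕ) [NeZero lam] (π : Fin k → ℕ → ℕ)
    (c : Fin k → ℕ → ZMod lam) (c' : Fin k → ZMod lam) (t1 t2 : ∀ α, Fin (p α)) (τ : ℤ)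
    (hτ : |τ| < ((∏ α, p α ^ (m α - 1) : ℕ) : ℤ)) :
    ∑ γ : ∀ α, Fin (p α),
        accf (∏ α, p α ^ (m α - 1)) (seqC lam (RFun p m lam π c c' γ t1))
          (seqC lam (RFun p m lam π c c' γ t2)) τ =
      ∑ x : (∀ α, Fin (p α)) × Fin (∏ α, p α ^ (m α - 1)) × Fin (∏ α, p α ^ (m α - 1)),
        if ((x.2.2 : ℕ) : ℤ) = (x.2.1 : ℕ) + τ then
          (ZMod.stdAddChar (RFun p m lam π c c' x.1 t1 x.2.1
            - RFun p m lam π c c' x.1 t2 x.2.2) : ℂ)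
        else 0 := by
  rw [Fintype.sum_prod_type]
  refine Finset.sum_congr rfl fun γ _ => ?_
  rw [Fintype.sum_prod_type, accf_eq _ _ _ _ hτ]
  simp only [seqC_mul_conj]

/-- The correlation sum vanishes away from the trivial case. The pattern of a triple `(γ, i, j)`
records in which digits `i` and `j` agree; it determines which coordinate to shift. -/
lemma sum_accf_eq_zero {k : ℕ} (p m : Fin k → ℕ) (hp : ∀ α, 0 < p α) (hm : ∀ α, 2 ≤ m α)
    (lam : ℕ) (hlam : 0 < lam) (hdvd : ∀ α, p α ∣ lam)
    (π : Fin k → ℕ → ℕ)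
    (hπ : ∀ α, Set.BijOn (π α) (Set.Iio (m α - 1)) (Set.Iio (m α - 1)))
    (c : Fin k → ℕ → ZMod lam) (c' : Fin k → ZMod lam)
    (t1 t2 : ∀ α, Fin (p α)) (τ : ℤ) (hτ : |τ| < ((∏ α, p α ^ (m α - 1) : ℕ) : ℤ))
    (hne : τ ≠ 0 ∨ t1 ≠ t2) :
    ∑ γ : ∀ α, Fin (p α),
        accf (∏ α, p α ^ (m α - 1)) (seqC lam (RFun p m lam π c c' γ t1))
          (seqC lam (RFun p m lam π c c' γ t2)) τ = 0 := by
  have : NeZero lam := ⟨hlam.ne'⟩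
  rw [sum_accf_eq p m lam π c c' t1 t2 τ hτ]
  have hch : ∀ (α : Fin k) (a b : ℕ), a < p α → b < p α → a ≠ b →
      (ZMod.stdAddChar (((lam / p α : ℕ) : ZMod lam) * ((a : ZMod lam) - (b : ZMod lam))) : ℂ) ≠ 1 :=
    fun α a b ha hb hab =>
      stdAddChar_ne_one _ _ (cast_div_mul_sub_ne_zero lam (p α) hlam (hdvd α) a b ha hb hab)
  have hpat : ∀ (α : Fin k) (b : Fin (m α - 1)) (i j : Fin (∏ α, p α ^ (m α - 1))),
      dig p m i α b = dig p m j α b → ∀ α' β,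
        (dig p m (shiftN p m α b i) α' β = dig p m (shiftN p m α b j) α' β) =
          (dig p m i α' β = dig p m j α' β) := by
    intro α b i j hij α' β
    by_cases h : α' = α ∧ β = b
    · obtain ⟨rfl, rfl⟩ := h
      rw [dig_shiftN_same, dig_shiftN_same, hij]
      simp
    · rw [dig_shiftN_ne p m hp _ _ _ _ _ h, dig_shiftN_ne p m hp _ _ _ _ _ h]
  refine sum_eq_zero_of_twist _
    (fun x α β => dig p m x.2.1 α β = dig p m x.2.2 α β) fun d => ?_
  by_cases h0 : ∃ α, ¬ d α (π α 0)
  · -- Some digit at the start of a path differs: summing over `γ α` gives cancellation.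
    obtain ⟨α, hα⟩ := h0
    refine ⟨fun x => (Function.update x.1 α (digitSucc (x.1 α)), x.2),
      fun x => ZMod.stdAddChar (((lam / p α : ℕ) : ZMod lam) *
        ((dig p m x.2.1 α (π α 0) : ZMod lam) - (dig p m x.2.2 α (π α 0) : ZMod lam))), ?_, ?_⟩
    · intro x y hxy
      rw [Prod.mk.injEq] at hxy
      exact Prod.ext (update_digitSucc_injective p α hxy.1) hxy.2
    · rintro ⟨γ, i, j⟩ hx
      subst hx
      refine ⟨rfl, rfl, hch α _ _ (dig_lt p m hp _ _ _) (dig_lt p m hp _ _ _) hα, ?_⟩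
      simp only
      rw [RFun_shift_gamma p m lam hdvd, AddChar.map_add_eq_mul, mul_comm]
      simp
  push Not at h0
  by_cases h1 : ∃ b α, b < m α - 1 ∧ ¬ d α (π α b)
  · -- `b + 1` is the first position along a path at which the digits differ: shift at `b`.
    classical
    obtain ⟨⟨α, hb, hd⟩, hmin⟩ := And.intro (Nat.find_spec h1) (fun b => Nat.find_min (m := b) h1)
    rcases hf : Nat.find h1 with _ | b
    · rw [hf] at hd
      exact absurd (h0 α) hd
    rw [hf] at hb hd hmin
    have hmin' : ∀ b' ≤ b, d α (π α b') := by
      intro b' hb'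
      by_contra hcon
      exact hmin b' (by omega) ⟨α, by omega, hcon⟩
    have hb' : b < m α - 1 := by omega
    have hπb : π α b < m α - 1 := (hπ α).mapsTo hb'
    have hπb1 : π α (b + 1) ≠ π α b := fun h => by
      have := (hπ α).injOn hb hb' h
      omega
    refine ⟨fun x => (x.1, shiftN p m α ⟨π α b, hπb⟩ x.2.1, shiftN p m α ⟨π α b, hπb⟩ x.2.2),
      fun x => ZMod.stdAddChar (((lam / p α : ℕ) : ZMod lam) *
        ((dig p m x.2.1 α (π α (b + 1)) : ZMod lam) -
          (dig p m x.2.2 α (π α (b + 1)) : ZMod lam))), ?_, ?_⟩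
    · intro x y hxy
      simp only [Prod.mk.injEq] at hxy
      exact Prod.ext hxy.1 (Prod.ext (shiftN_injective p m α _ hxy.2.1)
        (shiftN_injective p m α _ hxy.2.2))
    · rintro ⟨γ, i, j⟩ hx
      subst hx
      simp only at hmin' hd ⊢
      have hij := hmin' b le_rfl
      have hlag := shiftN_sub p m α ⟨π α b, hπb⟩ i j hij
      refine ⟨?_, ?_, hch α _ _ (dig_lt p m hp _ _ _) (dig_lt p m hp _ _ _) hd, ?_⟩
      · funext α' β
        exact hpat α ⟨π α b, hπb⟩ i j hij α' β
      · rw [dig_shiftN_ne p m hp _ _ _ _ _ (fun h => hπb1 h.2),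
          dig_shiftN_ne p m hp _ _ _ _ _ (fun h => hπb1 h.2)]
      · rw [RFun_shift p m hp hm lam hdvd π hπ c c' γ t1 t2 i j α b hb' hπb hmin',
          AddChar.map_add_eq_mul, if_neg (by omega : ¬ b = m α - 2), mul_ite, mul_zero, mul_comm]
        refine if_congr ?_ rfl rfl
        omega
  push Not at h1
  have hall : ∀ i j : Fin (∏ α, p α ^ (m α - 1)),
      (fun α β => dig p m i α β = dig p m j α β) = d → i = j := by
    rintro i j rfl
    refine eq_of_dig_eq p m i j fun α β hβ => ?_
    obtain ⟨b, hb, rfl⟩ := (hπ α).surjOn hβ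
    exact h1 b α hb
  by_cases hτ0 : τ = 0
  · -- Now `i = j`, and the last digit of a path of a block with `t1 α ≠ t2 α` is shifted.
    have ht : t1 ≠ t2 := hne.resolve_left fun h => h hτ0
    obtain ⟨α, hα⟩ := Function.ne_iff.1 ht
    have hmα := hm α
    have hb : m α - 2 < m α - 1 := by omega
    have hπb : π α (m α - 2) < m α - 1 := (hπ α).mapsTo hb
    refine ⟨fun x => (x.1, shiftN p m α ⟨_, hπb⟩ x.2.1, shiftN p m α ⟨_, hπb⟩ x.2.2),
      fun x => ZMod.stdAddChar (((lam / p α : ℕ) : ZMod lam) *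
        (((t1 α : ℕ) : ZMod lam) - ((t2 α : ℕ) : ZMod lam))), ?_, ?_⟩
    · intro x y hxy
      simp only [Prod.mk.injEq] at hxy
      exact Prod.ext hxy.1 (Prod.ext (shiftN_injective p m α _ hxy.2.1)
        (shiftN_injective p m α _ hxy.2.2))
    · rintro ⟨γ, i, j⟩ hx
      obtain rfl := hall i j hx
      subst hx
      refine ⟨?_, rfl, hch α _ _ (t1 α).2 (t2 α).2 (fun h => hα (Fin.ext h)), ?_⟩
      · funext α' β
        simp
      · simp only
        rw [RFun_shift p m hp hm lam hdvd π hπ c c' γ t1 t2 i i α _ hb hπb fun _ _ => rfl,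
          AddChar.map_add_eq_mul, if_pos rfl, mul_ite, mul_zero, mul_comm]
        refine if_congr ?_ rfl rfl
        omega
  · -- Now `i = j`, so no triple has lag `τ` and the weights are zero.
    refine ⟨id, fun _ => 0, Function.injective_id, ?_⟩
    rintro ⟨γ, i, j⟩ hx
    obtain rfl := hall i j hx
    refine ⟨hx, rfl, zero_ne_one, ?_⟩
    simp [hτ0]

/-- Lemma 3: the codes `{ψ(R_t^γ)}_γ` of length `N = ∏_α p_α^{m_α-1}`
form a CCC-type family: the summed cross-correlation over `γ` equals `∏_α p_α^{m_α}`
at `t1 = t2, τ = 0`, and vanishes for `0 < |τ| < N` (same `t`) and for `|τ| < N`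
(different `t`). -/
theorem R_ccc (k : ℕ) (p m : Fin k → ℕ) (hp : ∀ α, (p α).Prime) (hm : ∀ α, 2 ≤ m α)
    (lam : ℕ) (hlam : 0 < lam) (hdvd : ∀ α, p α ∣ lam)
    (π : Fin k → ℕ → ℕ)
    (hπ : ∀ α, Set.BijOn (π α) (Set.Iio (m α - 1)) (Set.Iio (m α - 1)))
    (c : Fin k → ℕ → ZMod lam) (c' : Fin k → ZMod lam)
    (t1 t2 : ∀ α, Fin (p α)) (τ : ℤ) :
    (t1 = t2 ∧ τ = 0 →
      ∑ γ : ∀ α, Fin (p α),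
          accf (∏ α, p α ^ (m α - 1)) (seqC lam (RFun p m lam π c c' γ t1))
            (seqC lam (RFun p m lam π c c' γ t2)) τ = ∏ α, (p α : ℂ) ^ (m α)) ∧
    (t1 = t2 ∧ 0 < |τ| ∧ |τ| < ((∏ α, p α ^ (m α - 1) : ℕ) : ℤ) →
      ∑ γ : ∀ α, Fin (p α),
          accf (∏ α, p α ^ (m α - 1)) (seqC lam (RFun p m lam π c c' γ t1))
            (seqC lam (RFun p m lam π c c' γ t2)) τ = 0) ∧
    (t1 ≠ t2 ∧ |τ| < ((∏ α, p α ^ (m α - 1) : ℕ) : ℤ) →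
      ∑ γ : ∀ α, Fin (p α),
          accf (∏ α, p α ^ (m α - 1)) (seqC lam (RFun p m lam π c c' γ t1))
            (seqC lam (RFun p m lam π c c' γ t2)) τ = 0) := by
  have hp0 : ∀ α, 0 < p α := fun α => (hp α).pos
  have : NeZero lam := ⟨hlam.ne'⟩
  refine ⟨?_, ?_, ?_⟩
  · rintro ⟨rfl, rfl⟩
    have hN : (0 : ℤ) < ((∏ α, p α ^ (m α - 1) : ℕ) : ℤ) := by
      exact_mod_cast Finset.prod_pos fun α _ => pow_pos (hp0 α) _
    have h1 : ∀ γ : ∀ α, Fin (p α),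
        accf (∏ α, p α ^ (m α - 1)) (seqC lam (RFun p m lam π c c' γ t1))
          (seqC lam (RFun p m lam π c c' γ t1)) 0 = ((∏ α, p α ^ (m α - 1) : ℕ) : ℂ) := by
      intro γ
      unfold accf
      rw [if_pos ⟨le_rfl, hN⟩]
      simp only [Int.toNat_zero, add_zero, Nat.sub_zero, seqC_mul_conj, sub_self,
        AddChar.map_zero_eq_one, Finset.sum_const, Finset.card_range, nsmul_eq_mul, mul_one]
    rw [Finset.sum_congr rfl fun γ _ => h1 γ, Finset.sum_const, Finset.card_univ,
      Fintype.card_pi, nsmul_eq_mul]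
    simp only [Fintype.card_fin]
    rw [← Nat.cast_mul, ← Finset.prod_mul_distrib, Nat.cast_prod]
    refine Finset.prod_congr rfl fun α _ => ?_
    have hmα := hm α
    rw [← pow_succ', show m α - 1 + 1 = m α by omega, Nat.cast_pow]
  · rintro ⟨_, h0, hN⟩
    exact sum_accf_eq_zero p m hp0 hm lam hlam hdvd π hπ c c' t1 t2 τ hN (Or.inl (abs_pos.1 h0))
  · rintro ⟨ht, hN⟩
    exact sum_accf_eq_zero p m hp0 hm lam hlam hdvd π hπ c c' t1 t2 τ hN (Or.inr ht)
end

section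
/- Let p_1,...,p_k be primes, m_α ≥ 2, and λ divisible by each p_α. Define codes C_{s,t} = [ψ(a_{s,t}^γ)]_{γ ∈ ∏_α Z_{p_α}} with a_{s,t}^γ = f + Σ_α (λ/p_α) v_{p_α,π_α(1)} γ_α + Σ_α (λ/p_α) v_{p_α,π_α(m_α−1)} t_α + Σ_α (λ/p_α) v'_{p_α} s_α, where f = Σ_α f_α is the sum of quadratic-plus-linear forms f_α as above. Then the family I = {C_{s,t} : s,t ∈ ∏_α Z_{p_α}} is an IGC code set with K = (p_1···p_k)^2 codes, M = p_1···p_k sequences per code, sequence length L = ∏_α p_α^{m_α}, and ZCZ width Z = ∏_α p_α^{m_α−1}; the group indexed by t is I^t = {C_{s,t} : s ∈ ∏_α Z_{p_α}}. Explicitly: C(C_{s1,t1}, C_{s2,t2})(τ) = ML if s1=s2, t1=t2, τ=0; = 0 if s1=s2, t1=t2, 0<|τ|<Z; = 0 if s1≠s2, t1=t2, |τ|<Z; and = 0 if t1≠t2 for all |τ|<L. -/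
/-!
Write the code correlation as a sum, over rows `γ` and pairs of positions `(i, j)` with
`j - i = τ`, of `ω ^ (a¹(i) - a²(j))`. In each block `α`, set `y_0 = γ_α`, let `y_1, …, y_{m-1}` be
the digits of a position in the order given by `π_α`, and set `y_m = t_α`. The quadratic terms of
the phase, including those in `γ` and `t`, are then the path form `(λ / p_α) ∑ y_b y_{b+1}`.

Let `y¹`, `y²` be the paths of `(γ, i)` and `(γ, j)`. They share `y_0`. If they disagree somewhere
in block `α`, let `b + 1` be the first place where they do. Incrementing the common value `y_b`
cyclically in both is a bijection preserving `j - i` and all other digits, and by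
`pathPhase_bump` it multiplies the summand by `ω ^ ((λ / p_α) (y¹_{b+1} - y²_{b+1})) ≠ 1`. Hence
all pairs with disagreeing paths cancel (`sum_corrTerm_eq_zero`, via the averaging argument
`sum_eq_zero_of_twist`).

If the paths agree in all blocks, then `t₁ = t₂` and `i ≡ j` modulo `Z` (`of_pathVal_eq`); this
settles the case of distinct groups. For `|τ| < Z` it forces `i = j` and `τ = 0`. When `s₁ ≠ s₂`,
incrementing an outer coordinate where they differ twists these remaining summands by
`ω ^ ((λ / p_α) (s₁ - s₂)_α) ≠ 1`, so they cancel too. The value at `τ = 0` for equal codes is a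
direct count.
-/

open Finset

/-! ### Mixed-radix digits -/

/-- Partial products `∏_{a < n} B a`, the place values of the mixed-radix system with radices `B`. -/
def partProd {k : ℕ} (B : Fin k → ℕ) (n : ℕ) : ℕ :=
  ∏ a ∈ Finset.univ.filter (fun a : Fin k => (a : ℕ) < n), B a

lemma partProd_succ {k : ℕ} (B : Fin k → ℕ) (α : Fin k) :
    partProd B (α + 1) = partProd B α * B α := by
  unfold partProd
  have : Finset.univ.filter (fun a : Fin k => (a : ℕ) < α + 1)
      = insert α (Finset.univ.filter (fun a : Fin k => (a : ℕ) < α)) := by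
    ext a
    simp only [mem_filter, mem_univ, true_and, mem_insert, Fin.ext_iff]
    omega
  rw [this, Finset.prod_insert (by simp), mul_comm]

lemma partProd_dvd {k : ℕ} (B : Fin k → ℕ) {a b : ℕ} (h : a ≤ b) :
    partProd B a ∣ partProd B b := by
  apply Finset.prod_dvd_prod_of_subset
  intro x
  simp only [mem_filter, mem_univ, true_and]
  omega

lemma partProd_top {k : ℕ} (B : Fin k → ℕ) : partProd B k = ∏ α, B α := by
  unfold partProd
  congr 1
  ext a
  simp

lemma partProd_pos {k : ℕ} (B : Fin k → ℕ) (hB : ∀ α, 0 < B α) (n : ℕ) : 0 < partProd B n :=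
  Finset.prod_pos fun a _ => hB a

/-- The mixed-radix digits determine the residue modulo the full product of the radices. -/
lemma mod_partProd_eq {k : ℕ} (B : Fin k → ℕ) {i j : ℕ}
    (h : ∀ α : Fin k, i / partProd B α % B α = j / partProd B α % B α) :
    i % ∏ α, B α = j % ∏ α, B α := by
  rw [← partProd_top]
  have key : ∀ n ≤ k, i % partProd B n = j % partProd B n := by
    intro n
    induction n with
    | zero => intro _; simp [partProd, Nat.mod_one]
    | succ n ih =>
      intro hn
      have h1 := partProd_succ B ⟨n, hn⟩
      simp only at h1
      rw [h1, Nat.mod_mul, Nat.mod_mul, ih (by omega)]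
      have := h ⟨n, hn⟩
      simp only at this
      rw [this]
  exact key k le_rfl

lemma mod_pow_eq {q n x y : ℕ} (h : ∀ β < n, x / q ^ β % q = y / q ^ β % q) :
    x % q ^ n = y % q ^ n := by
  induction n with
  | zero => simp [Nat.mod_one]
  | succ n ih =>
    rw [Nat.mod_pow_succ, Nat.mod_pow_succ, ih fun β hβ => h β (by omega), h n (by omega)]

lemma mod_div_mod {i w q N : ℕ} (h : w * q ∣ N) : i % N / w % q = i / w % q := by
  obtain ⟨r, rfl⟩ := h
  rw [mul_assoc, Nat.mod_mul_right_div_self, Nat.mod_mod_of_dvd _ (dvd_mul_right q r)]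

/-! ### Incrementing a digit -/

/-- Cyclically increment the digit of `i` that has place value `w` and radix `q`,
keeping all the other digits. -/
def shift (w q i : ℕ) : ℕ := w * (q * (i / (w * q)) + (i / w + 1) % q) + i % w

lemma shift_div {w : ℕ} (hw : 0 < w) (q i : ℕ) :
    shift w q i / w = q * (i / (w * q)) + (i / w + 1) % q := by
  unfold shift
  rw [Nat.mul_add_div hw, Nat.div_eq_of_lt (Nat.mod_lt _ hw), add_zero]

lemma shift_mod (w q i : ℕ) : shift w q i % w = i % w := by
  unfold shift
  rw [Nat.mul_add_mod, Nat.mod_mod]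

lemma shift_digit {w : ℕ} (hw : 0 < w) (q i : ℕ) :
    shift w q i / w % q = (i / w % q + 1) % q := by
  rw [shift_div hw, Nat.mul_add_mod, Nat.mod_mod, Nat.mod_add_mod]

lemma shift_div_mul {w q : ℕ} (hw : 0 < w) (hq : 0 < q) (i : ℕ) :
    shift w q i / (w * q) = i / (w * q) := by
  rw [← Nat.div_div_eq_div_mul, shift_div hw, Nat.mul_add_div hq,
    Nat.div_eq_of_lt (Nat.mod_lt _ hq), add_zero]

lemma digit_expand (w q i : ℕ) : w * (q * (i / (w * q)) + i / w % q) + i % w = i := by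
  rw [← Nat.div_div_eq_div_mul, Nat.div_add_mod, Nat.div_add_mod]

/-- The change of value under a shift depends only on the digit that is shifted. -/
lemma shift_sub (w q i : ℕ) :
    (shift w q i : ℤ) - i = w * (((i / w % q + 1) % q : ℕ) - (i / w % q : ℕ)) := by
  have h1 := congrArg (Nat.cast : ℕ → ℤ) (digit_expand w q i)
  have h2 : shift w q i = w * (q * (i / (w * q)) + (i / w % q + 1) % q) + i % w := by
    unfold shift
    rw [Nat.mod_add_mod]
  replace h2 := congrArg (Nat.cast : ℕ → ℤ) h2
  simp only [Nat.cast_add, Nat.cast_mul] at h1 h2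
  linear_combination h2 + h1

lemma succ_mod_inj {q a b : ℕ} (ha : a < q) (hb : b < q) (h : (a + 1) % q = (b + 1) % q) :
    a = b := by
  have h' : a ≡ b [MOD q] := Nat.ModEq.add_right_cancel' 1 h
  rwa [Nat.ModEq, Nat.mod_eq_of_lt ha, Nat.mod_eq_of_lt hb] at h'

lemma shift_injective {w q : ℕ} (hw : 0 < w) (hq : 0 < q) : Function.Injective (shift w q) := by
  intro i j h
  have h1 : i / (w * q) = j / (w * q) := by rw [← shift_div_mul hw hq, h, shift_div_mul hw hq]
  have h2 : i % w = j % w := by rw [← shift_mod w q, h, shift_mod]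
  have h3 : i / w % q = j / w % q :=
    succ_mod_inj (Nat.mod_lt _ hq) (Nat.mod_lt _ hq) (by rw [← shift_digit hw, h, shift_digit hw])
  rw [← digit_expand w q i, ← digit_expand w q j, h1, h2, h3]

lemma shift_div_of_dvd {w q N : ℕ} (hw : 0 < w) (hq : 0 < q) (h : w * q ∣ N) (i : ℕ) :
    shift w q i / N = i / N := by
  obtain ⟨r, rfl⟩ := h
  rw [← Nat.div_div_eq_div_mul, shift_div_mul hw hq, Nat.div_div_eq_div_mul]

lemma shift_mod_of_dvd {w q N : ℕ} (h : N ∣ w) (i : ℕ) :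
    shift w q i % N = i % N := by
  rw [← Nat.mod_mod_of_dvd _ h, shift_mod, Nat.mod_mod_of_dvd _ h]

lemma shift_lt {w q N : ℕ} (hw : 0 < w) (hq : 0 < q) (h : w * q ∣ N) {i : ℕ} (hi : i < N) :
    shift w q i < N := by
  have hN : 0 < N := by omega
  have := shift_div_of_dvd hw hq h i
  rw [Nat.div_eq_of_lt hi] at this
  exact (Nat.div_eq_zero_iff_lt hN).1 this

lemma shift_digit_of_dvd {w q w' q' : ℕ} (hw : 0 < w) (hq : 0 < q)
    (h : w * q ∣ w' ∨ w' * q' ∣ w) (i : ℕ) : shift w q i / w' % q' = i / w' % q' := by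
  rcases h with h | h
  · rw [shift_div_of_dvd hw hq h]
  · rw [← Nat.mod_mul_right_div_self, ← Nat.mod_mul_right_div_self, shift_mod_of_dvd h]

lemma shift_sub_shift {w q i j : ℕ} (h : i / w % q = j / w % q) :
    (shift w q j : ℤ) - shift w q i = j - i := by
  have h1 := shift_sub w q i
  have h2 := shift_sub w q j
  rw [h] at h1
  linear_combination h2 - h1

/-! ### Place values of the inner digits -/

/-- Place value of the digit `v_{p_α, β + 1}`. -/
def wt {k : ℕ} (p m : Fin k → ℕ) (α : Fin k) (β : ℕ) : ℕ :=
  partProd (fun a => p a ^ (m a - 1)) α * p α ^ β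

section digits
variable {k : ℕ} {p m : Fin k → ℕ}

lemma wt_pos (hp : ∀ α, 0 < p α) (α : Fin k) (β : ℕ) : 0 < wt p m α β :=
  Nat.mul_pos (partProd_pos _ (fun a => pow_pos (hp a) _) _) (pow_pos (hp α) _)

lemma wt_dvd_partProd (α : Fin k) {β : ℕ} (hβ : β < m α - 1) :
    wt p m α β * p α ∣ partProd (fun a => p a ^ (m a - 1)) (α + 1) := by
  rw [partProd_succ, wt, mul_assoc, ← pow_succ]
  exact Nat.mul_dvd_mul_left _ (pow_dvd_pow _ hβ)

lemma wt_dvd_prod (α : Fin k) {β : ℕ} (hβ : β < m α - 1) :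
    wt p m α β * p α ∣ ∏ a, p a ^ (m a - 1) := by
  rw [← partProd_top (fun a => p a ^ (m a - 1))]
  exact (wt_dvd_partProd α hβ).trans (partProd_dvd _ α.2)

lemma wt_comparable {α α' : Fin k} {β β' : ℕ} (hβ : β < m α - 1) (hβ' : β' < m α' - 1)
    (h : α ≠ α' ∨ β ≠ β') : wt p m α β * p α ∣ wt p m α' β' ∨ wt p m α' β' * p α' ∣ wt p m α β := by
  rcases lt_trichotomy α α' with h1 | rfl | h1
  · exact Or.inl ((wt_dvd_partProd α hβ).trans ((partProd_dvd _ h1).trans (dvd_mul_right _ _)))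
  · have h' : β ≠ β' := h.resolve_left (by simp)
    rcases lt_or_gt_of_ne h' with h2 | h2
    · left
      rw [wt, wt, mul_assoc, ← pow_succ]
      exact Nat.mul_dvd_mul_left _ (pow_dvd_pow _ h2)
    · right
      rw [wt, wt, mul_assoc, ← pow_succ]
      exact Nat.mul_dvd_mul_left _ (pow_dvd_pow _ h2)
  · exact Or.inr ((wt_dvd_partProd α' hβ').trans ((partProd_dvd _ h1).trans (dvd_mul_right _ _)))

lemma dig_eq (i : ℕ) (α : Fin k) {β : ℕ} (hβ : β < m α - 1) :
    dig p m (i % ∏ a, p a ^ (m a - 1)) α β = i / wt p m α β % p α := by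
  have h1 : partProd (fun a => p a ^ (m a - 1)) α * p α ^ (m α - 1) ∣ ∏ a, p a ^ (m a - 1) := by
    rw [← partProd_succ (fun a => p a ^ (m a - 1)), ← partProd_top (fun a => p a ^ (m a - 1))]
    exact partProd_dvd _ α.2
  change _ / partProd (fun a => p a ^ (m a - 1)) α % _ / _ % _ = _
  rw [mod_div_mod h1, mod_div_mod (by rw [← pow_succ]; exact pow_dvd_pow _ hβ),
    Nat.div_div_eq_div_mul, wt]

lemma odig_eq (i Z : ℕ) (α : Fin k) :
    odig p (i / Z) α = i / (Z * partProd p α) % p α := by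
  change _ / partProd p α % _ = _
  rw [Nat.div_div_eq_div_mul]

/-- The digits `v_{p_α, β}` determine the residue modulo `Z = ∏ p_α ^ (m_α - 1)`. -/
lemma mod_eq_of_digits {i j : ℕ}
    (h : ∀ (α : Fin k), ∀ β < m α - 1, i / wt p m α β % p α = j / wt p m α β % p α) :
    i % ∏ a, p a ^ (m a - 1) = j % ∏ a, p a ^ (m a - 1) := by
  apply mod_partProd_eq
  intro α
  apply mod_pow_eq
  intro β hβ
  rw [Nat.div_div_eq_div_mul, Nat.div_div_eq_div_mul]
  exact h α β hβ

end digits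

/-! ### Twisted sums and characters -/

/-- If `F` is multiplied by `ζ` under an injective self-map that keeps `ζ`, and `ζ ≠ 1` wherever
`F ≠ 0`, then the sum of `F` vanishes; the map may be chosen separately on each fibre of `κ`. -/
lemma sum_eq_zero_of_twist_s7 {X ι : Type*} (s : Finset X) (F : X → ℂ) (κ : X → ι)
    (h : ∀ i, ∃ (σ : X → X) (ζ : X → ℂ), Set.InjOn σ s ∧ ∀ x ∈ s, κ x = i →
      σ x ∈ s ∧ κ (σ x) = i ∧ ζ (σ x) = ζ x ∧ F (σ x) = ζ x * F x ∧ (F x ≠ 0 → ζ x ≠ 1)) :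
    ∑ x ∈ s, F x = 0 := by
  classical
  rw [← Finset.sum_fiberwise_of_maps_to (t := s.image κ) (g := κ)
    (fun x hx => Finset.mem_image_of_mem κ hx)]
  refine Finset.sum_eq_zero fun i _ => ?_
  obtain ⟨σ, ζ, hσ, H⟩ := h i
  set T := s.filter (fun x => κ x = i) with hT
  have HT : ∀ x ∈ T, σ x ∈ T ∧ ζ (σ x) = ζ x ∧ F (σ x) = ζ x * F x ∧ (F x ≠ 0 → ζ x ≠ 1) := by
    intro x hx
    obtain ⟨hx1, hx2⟩ := Finset.mem_filter.1 hx
    obtain ⟨a, b, c⟩ := H x hx1 hx2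
    exact ⟨Finset.mem_filter.2 ⟨a, b⟩, c⟩
  -- `F` is the coboundary `G ∘ σ - G` of `G = F / (ζ - 1)`
  have h1 : ∀ x ∈ T, F x = F (σ x) / (ζ (σ x) - 1) - F x / (ζ x - 1) := by
    intro x hx
    obtain ⟨-, h2, h3, h4⟩ := HT x hx
    rw [h2, h3]
    by_cases h0 : F x = 0
    · simp [h0]
    · have := sub_ne_zero.2 (h4 h0)
      field_simp
  rw [Finset.sum_congr rfl h1, Finset.sum_sub_distrib, sub_eq_zero]
  have hinj : Set.InjOn σ T := hσ.mono (by intro x hx; exact (Finset.mem_filter.1 hx).1)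
  have himg : T.image σ = T :=
    Finset.eq_of_subset_of_card_le (Finset.image_subset_iff.2 fun x hx => (HT x hx).1)
      (Finset.card_image_of_injOn hinj).ge
  conv_rhs => rw [← himg]
  rw [Finset.sum_image hinj]

lemma accf_eq_sum (L : ℕ) (a b : ℕ → ℂ) (τ : ℤ) :
    accf L a b τ = ∑ i ∈ range L, ∑ j ∈ range L,
      if (j : ℤ) - i = τ then a i * (starRingEnd ℂ) (b j) else 0 := by
  unfold accf
  split_ifs with h1 h2
  · obtain ⟨n, rfl⟩ := Int.eq_ofNat_of_zero_le h1.1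
    have e : ∀ i j : ℕ, ((j : ℤ) - i = n) ↔ j = i + n := by intros; omega
    simp only [e, Finset.sum_ite_eq', Int.toNat_natCast, mem_range]
    rw [← Finset.sum_filter]
    congr 1
    ext i
    simp only [mem_range, mem_filter]
    omega
  · obtain ⟨n, hn⟩ := Int.eq_ofNat_of_zero_le (show 0 ≤ -τ by omega)
    obtain rfl : τ = -n := by omega
    have e : ∀ i j : ℕ, ((j : ℤ) - i = -n) ↔ i = j + n := by intros; omega
    rw [Finset.sum_comm]
    simp only [e, Finset.sum_ite_eq', neg_neg, Int.toNat_natCast, mem_range]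
    rw [← Finset.sum_filter]
    congr 1
    ext i
    simp only [mem_range, mem_filter]
    omega
  · symm
    refine Finset.sum_eq_zero fun i hi => Finset.sum_eq_zero fun j hj => if_neg ?_
    rw [mem_range] at hi hj
    omega

/-- `λ / q` times a natural number depends exactly on that number modulo `q`. -/
lemma div_mul_cast_eq_iff {lam q : ℕ} (hlam : 0 < lam) (h : q ∣ lam) (a b : ℕ) :
    ((lam / q : ℕ) : ZMod lam) * a = ((lam / q : ℕ) : ZMod lam) * b ↔ a ≡ b [MOD q] := by
  obtain ⟨r, rfl⟩ := h
  have hq : 0 < q := Nat.pos_of_mul_pos_right hlam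
  have hr : 0 < r := Nat.pos_of_mul_pos_left hlam
  rw [Nat.mul_div_cancel_left _ hq, ← Nat.cast_mul, ← Nat.cast_mul, ZMod.natCast_eq_natCast_iff,
    mul_comm q r]
  exact Nat.ModEq.mul_left_cancel_iff' (Nat.pos_iff_ne_zero.1 hr)

/-! ### The path form of the phase -/

/-- The values `y_0, y_1, …, y_m` along the path of the `α`-th block: `y_0 = γ_α`,
`y_b = v_{p_α, π_α(b)}` for `1 ≤ b < m`, and `y_m = t_α`. The quadratic form together with the
terms in `γ` and `t` is `(λ / p_α) ∑_{b < m} y_b y_{b+1}`. -/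
def pathVal {k : ℕ} (p m : Fin k → ℕ) (π : Fin k → ℕ → ℕ) (t γ : ∀ α, Fin (p α)) (i : ℕ)
    (α : Fin k) (b : ℕ) : ℕ :=
  if b = 0 then γ α else if b < m α then i / wt p m α (π α (b - 1)) % p α else t α

/-- The part of the phase that depends only on the path values. -/
def pathPhase {k : ℕ} (p m : Fin k → ℕ) (lam : ℕ) (π : Fin k → ℕ → ℕ)
    (c : Fin k → ℕ → ZMod lam) (c' : Fin k → ZMod lam) (Y : Fin k → ℕ → ℕ) : ZMod lam :=
  ∑ α, ((lam / p α : ℕ) : ZMod lam) * ∑ b ∈ range (m α), (Y α b : ZMod lam) * Y α (b + 1)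
    + ∑ α, (∑ b ∈ range (m α - 1), c α (π α b) * (Y α (b + 1) : ZMod lam) + c' α)

/-- Place value of the `α`-th outer coordinate, the one multiplied by `s_α`. -/
def outerWt {k : ℕ} (p m : Fin k → ℕ) (α : Fin k) : ℕ :=
  (∏ a, p a ^ (m a - 1)) * partProd p α

/-- The part of the phase that depends on the outer coordinates. -/
def outerPhase {k : ℕ} (p m : Fin k → ℕ) (lam : ℕ) (s : ∀ α, Fin (p α)) (i : ℕ) : ZMod lam :=
  ∑ α, ((lam / p α : ℕ) : ZMod lam) * ((i / outerWt p m α % p α : ℕ) : ZMod lam)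
    * ((s α : ℕ) : ZMod lam)

/-- Increment the value at position `b` of the path of block `α`: the effect on `Y`. -/
def bump {k : ℕ} (p : Fin k → ℕ) (α : Fin k) (b : ℕ) (Y : Fin k → ℕ → ℕ) : Fin k → ℕ → ℕ :=
  fun a c => if a = α ∧ c = b then (Y a c + 1) % p a else Y a c

/-- The effect of incrementing `y_b` on the row index. -/
def stepRow {k : ℕ} (p : Fin k → ℕ) (α : Fin k) (b : ℕ) (γ : ∀ α, Fin (p α)) : ∀ α, Fin (p α) :=
  if b = 0 then
    Function.update γ α ⟨(γ α + 1) % p α, Nat.mod_lt _ (Nat.zero_lt_of_lt (γ α).2)⟩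
  else γ

/-- The effect of incrementing `y_b` on a position of the sequence. -/
def stepPos {k : ℕ} (p m : Fin k → ℕ) (π : Fin k → ℕ → ℕ) (α : Fin k) (b i : ℕ) : ℕ :=
  if b = 0 then i else shift (wt p m α (π α (b - 1))) (p α) i

section path
variable {k : ℕ} {p m : Fin k → ℕ} {lam : ℕ} {π : Fin k → ℕ → ℕ}
  {c : Fin k → ℕ → ZMod lam} {c' : Fin k → ZMod lam}

lemma aFun_eq (hm : ∀ α, 2 ≤ m α)
    (hπ : ∀ α, Set.BijOn (π α) (Set.Iio (m α - 1)) (Set.Iio (m α - 1)))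
    (s t γ : ∀ α, Fin (p α)) (i : ℕ) :
    aFun p m lam π c c' s t γ i
      = pathPhase p m lam π c c' (pathVal p m π t γ i) + outerPhase p m lam s i := by
  have hd : ∀ α, ∀ b < m α - 1,
      dig p m (i % ∏ a, p a ^ (m a - 1)) α (π α b) = pathVal p m π t γ i α (b + 1) := by
    intro α b hb
    rw [dig_eq _ _ ((hπ α).mapsTo hb), pathVal, if_neg (by omega), if_pos (by omega)]
    simp
  have h0 : ∀ α, pathVal p m π t γ i α 0 = γ α := fun α => by simp [pathVal]
  have hlast : ∀ α, pathVal p m π t γ i α (m α) = t α := fun α => by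
    rw [pathVal, if_neg (by have := hm α; omega), if_neg (by omega)]
  unfold aFun RFun fFun pathPhase outerPhase
  congr 1
  · rw [← Finset.sum_add_distrib, ← Finset.sum_add_distrib, ← Finset.sum_add_distrib]
    refine Finset.sum_congr rfl fun α _ => ?_
    have hc : ∑ β ∈ range (m α - 1), c α β * (dig p m (i % ∏ a, p a ^ (m a - 1)) α β : ZMod lam)
        = ∑ b ∈ range (m α - 1), c α (π α b) * (pathVal p m π t γ i α (b + 1) : ZMod lam) := by
      symm
      refine Finset.sum_nbij (π α) ?_ ?_ ?_ ?_
      · intro b hb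
        exact mem_range.2 ((hπ α).mapsTo (mem_range.1 hb))
      · rw [Finset.coe_range]; exact (hπ α).injOn
      · rw [Finset.coe_range]; exact (hπ α).surjOn
      · intro b hb
        rw [hd α b (mem_range.1 hb)]
    have hl := hlast α
    obtain ⟨n, hn⟩ : ∃ n, m α = n + 2 := ⟨m α - 2, by have := hm α; omega⟩
    have hq : ∑ b ∈ range (m α - 2),
          (dig p m (i % ∏ a, p a ^ (m a - 1)) α (π α b) : ZMod lam)
            * (dig p m (i % ∏ a, p a ^ (m a - 1)) α (π α (b + 1)) : ZMod lam)
        = ∑ b ∈ range (m α - 2), (pathVal p m π t γ i α (b + 1) : ZMod lam)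
            * (pathVal p m π t γ i α (b + 1 + 1) : ZMod lam) := by
      refine Finset.sum_congr rfl fun b hb => ?_
      rw [mem_range] at hb
      rw [hd α b (by omega), hd α (b + 1) (by omega)]
    rw [hc, hq, hd α 0 (by omega), hd α (m α - 2) (by omega), ← h0 α, ← hl]
    have e : m α - 2 = n := by omega
    rw [e, hn, Finset.sum_range_succ, Finset.sum_range_succ']
    ring
  · refine Finset.sum_congr rfl fun α _ => ?_
    rw [odig_eq]
    rfl

lemma pathVal_lt (hp : ∀ α, 0 < p α) (t γ : ∀ α, Fin (p α)) (i : ℕ) (α : Fin k) (b : ℕ) :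
    pathVal p m π t γ i α b < p α := by
  unfold pathVal
  split_ifs
  · exact (γ α).2
  · exact Nat.mod_lt _ (hp α)
  · exact (t α).2

lemma pathVal_step (hp : ∀ α, 0 < p α)
    (hπ : ∀ α, Set.BijOn (π α) (Set.Iio (m α - 1)) (Set.Iio (m α - 1)))
    (t γ : ∀ α, Fin (p α)) (i : ℕ) (α : Fin k) {b : ℕ} (hb : b < m α) :
    pathVal p m π t (stepRow p α b γ) (stepPos p m π α b i)
      = bump p α b (pathVal p m π t γ i) := by
  funext a e
  unfold bump
  by_cases hb0 : b = 0
  · subst hb0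
    by_cases he : e = 0
    · subst he
      by_cases ha : a = α
      · subst ha
        simp [pathVal, stepRow]
      · simp [pathVal, stepRow, ha]
    · simp [pathVal, stepPos, he]
  · have hbπ : π α (b - 1) < m α - 1 := (hπ α).mapsTo (show b - 1 < m α - 1 by omega)
    simp only [pathVal, stepRow, stepPos, if_neg hb0]
    by_cases he : e = 0
    · subst he
      rw [if_pos rfl, if_neg (by omega), if_pos rfl]
    · rw [if_neg he, if_neg he]
      by_cases hem : e < m a
      · rw [if_pos hem, if_pos hem]
        by_cases h : a = α ∧ e = b
        · rw [if_pos h]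
          obtain ⟨rfl, rfl⟩ := h
          exact shift_digit (wt_pos hp _ _) _ _
        · rw [if_neg h]
          refine shift_digit_of_dvd (wt_pos hp _ _) (hp α) ?_ i
          refine wt_comparable hbπ ((hπ a).mapsTo (show e - 1 < m a - 1 by omega)) ?_
          by_contra! hcon
          obtain ⟨rfl, h2⟩ := hcon
          have := (hπ α).injOn (show b - 1 < m α - 1 by omega) (show e - 1 < m α - 1 by omega) h2
          exact h ⟨rfl, by omega⟩
      · rw [if_neg hem, if_neg hem, if_neg]
        rintro ⟨rfl, rfl⟩
        exact hem hb

/-- If `y¹` and `y²` agree up to position `b` on the path of block `α`, incrementing position `b`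
in both changes the phase difference by `(λ / p_α) (y¹_{b+1} - y²_{b+1})`. -/
lemma pathPhase_bump (hlam : 0 < lam) (hdvd : ∀ α, p α ∣ lam) (Y₁ Y₂ : Fin k → ℕ → ℕ)
    (α : Fin k) {b : ℕ} (hb : b < m α) (hY : ∀ e ≤ b, Y₁ α e = Y₂ α e) :
    pathPhase p m lam π c c' (bump p α b Y₁) - pathPhase p m lam π c c' (bump p α b Y₂)
      = ((lam / p α : ℕ) : ZMod lam) * ((Y₁ α (b + 1) : ZMod lam) - Y₂ α (b + 1))
        + (pathPhase p m lam π c c' Y₁ - pathPhase p m lam π c c' Y₂) := by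
  have hcast : ∀ y : ℕ, ((lam / p α : ℕ) : ZMod lam) * (((y + 1) % p α : ℕ) : ZMod lam)
      = ((lam / p α : ℕ) : ZMod lam) * ((y : ZMod lam) + 1) := by
    intro y
    have := (div_mul_cast_eq_iff hlam (hdvd α) ((y + 1) % p α) (y + 1)).2 (Nat.mod_modEq _ _)
    rw [this]
    push_cast
    rfl
  have hlin : ∀ a ∈ Finset.univ,
      (∑ b' ∈ range (m a - 1), c a (π a b') * (bump p α b Y₁ a (b' + 1) : ZMod lam) + c' a)
        - (∑ b' ∈ range (m a - 1), c a (π a b') * (bump p α b Y₂ a (b' + 1) : ZMod lam)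
        + c' a) =
      (∑ b' ∈ range (m a - 1), c a (π a b') * (Y₁ a (b' + 1) : ZMod lam)
        + c' a) - (∑ b' ∈ range (m a - 1), c a (π a b') * (Y₂ a (b' + 1) : ZMod lam)
        + c' a) := by
    intro a _
    rw [add_sub_add_right_eq_sub, add_sub_add_right_eq_sub, ← Finset.sum_sub_distrib,
      ← Finset.sum_sub_distrib]
    refine Finset.sum_congr rfl fun e _ => ?_
    unfold bump
    split_ifs with h
    · obtain ⟨rfl, rfl⟩ := h
      rw [hY _ le_rfl]
      ring
    · rfl
  have hquad : ∀ a ∈ Finset.univ,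
      ((lam / p a : ℕ) : ZMod lam)
          * ∑ e ∈ range (m a), (bump p α b Y₁ a e : ZMod lam) * bump p α b Y₁ a (e + 1)
        - ((lam / p a : ℕ) : ZMod lam)
          * ∑ e ∈ range (m a), (bump p α b Y₂ a e : ZMod lam) * bump p α b Y₂ a (e + 1)
      = (if a = α then
          ((lam / p α : ℕ) : ZMod lam) * ((Y₁ α (b + 1) : ZMod lam) - Y₂ α (b + 1)) else 0)
        + (((lam / p a : ℕ) : ZMod lam) * ∑ e ∈ range (m a), (Y₁ a e : ZMod lam) * Y₁ a (e + 1)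
        - ((lam / p a : ℕ) : ZMod lam)
          * ∑ e ∈ range (m a), (Y₂ a e : ZMod lam) * Y₂ a (e + 1)) := by
    intro a _
    by_cases ha : a = α
    · subst ha
      rw [if_pos rfl]
      have hs : ((lam / p a : ℕ) : ZMod lam) * ((Y₁ a (b + 1) : ZMod lam) - Y₂ a (b + 1))
          = ∑ e ∈ range (m a), if e = b then
            ((lam / p a : ℕ) : ZMod lam) * ((Y₁ a (b + 1) : ZMod lam) - Y₂ a (b + 1)) else 0 := by
        rw [Finset.sum_ite_eq', if_pos (mem_range.2 hb)]
      rw [hs]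
      simp only [Finset.mul_sum]
      rw [← Finset.sum_sub_distrib, ← Finset.sum_sub_distrib, ← Finset.sum_add_distrib]
      refine Finset.sum_congr rfl fun e _ => ?_
      by_cases h1 : e = b
      · subst h1
        simp only [bump, true_and, if_true, if_neg (Nat.succ_ne_self e)]
        rw [← mul_assoc, ← mul_assoc, hcast, hcast, hY e le_rfl]
        ring
      · by_cases h2 : e + 1 = b
        · simp only [bump, true_and, if_neg h1, if_pos h2]
          rw [hY e (by omega), hY (e + 1) (by omega)]
          ring
        · simp only [bump, true_and, if_neg h1, if_neg h2]
          ring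
    · simp [bump, ha]
  have hl := Finset.sum_congr rfl hlin
  have hq := Finset.sum_congr rfl hquad
  rw [Finset.sum_sub_distrib, Finset.sum_sub_distrib] at hl
  rw [Finset.sum_sub_distrib, Finset.sum_add_distrib, Finset.sum_ite_eq', if_pos (mem_univ α),
    Finset.sum_sub_distrib] at hq
  unfold pathPhase
  linear_combination hq + hl

end path

/-! ### Cancellation in the correlation sum -/

section correlation
variable {k : ℕ} {p m : Fin k → ℕ} {lam : ℕ} {π : Fin k → ℕ → ℕ}
  {c : Fin k → ℕ → ZMod lam} {c' : Fin k → ZMod lam}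

lemma outerWt_pos (hp : ∀ α, 0 < p α) (α : Fin k) : 0 < outerWt p m α :=
  Nat.mul_pos (Finset.prod_pos fun a _ => pow_pos (hp a) _) (partProd_pos _ hp _)

lemma length_eq (hm : ∀ α, 2 ≤ m α) :
    ∏ α, p α ^ m α = (∏ a, p a ^ (m a - 1)) * ∏ a, p a := by
  rw [← Finset.prod_mul_distrib]
  refine Finset.prod_congr rfl fun α _ => ?_
  rw [← pow_succ]
  congr 1
  have := hm α
  omega

lemma outerWt_dvd_length (hm : ∀ α, 2 ≤ m α) (α : Fin k) :
    outerWt p m α * p α ∣ ∏ α, p α ^ m α := by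
  rw [length_eq hm, outerWt, mul_assoc, ← partProd_succ, ← partProd_top p]
  exact Nat.mul_dvd_mul_left _ (partProd_dvd _ α.2)

lemma stepRow_injective (α : Fin k) (b : ℕ) : Function.Injective (stepRow p α b) := by
  intro γ δ h
  unfold stepRow at h
  split_ifs at h
  · funext a
    have ha := congrFun h a
    by_cases e : a = α
    · subst e
      simp only [Function.update_self, Fin.mk.injEq] at ha
      exact Fin.ext (succ_mod_inj (γ a).2 (δ a).2 ha)
    · simpa [e] using ha
  · exact h

lemma stepPos_injective (hp : ∀ α, 0 < p α) (α : Fin k) (b : ℕ) :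
    Function.Injective (stepPos p m π α b) := by
  intro i j h
  unfold stepPos at h
  split_ifs at h
  · exact h
  · exact shift_injective (wt_pos hp _ _) (hp α) h

lemma stepPos_lt (hp : ∀ α, 0 < p α) (hm : ∀ α, 2 ≤ m α)
    (hπ : ∀ α, Set.BijOn (π α) (Set.Iio (m α - 1)) (Set.Iio (m α - 1)))
    (α : Fin k) {b : ℕ} (hb : b < m α) {i : ℕ} (hi : i < ∏ α, p α ^ m α) :
    stepPos p m π α b i < ∏ α, p α ^ m α := by
  unfold stepPos
  split_ifs with h
  · exact hi
  · refine shift_lt (wt_pos hp _ _) (hp α) ?_ hi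
    rw [length_eq hm]
    exact (wt_dvd_prod α ((hπ α).mapsTo (show b - 1 < m α - 1 by omega))).mul_right _

lemma outerPhase_step (hp : ∀ α, 0 < p α)
    (hπ : ∀ α, Set.BijOn (π α) (Set.Iio (m α - 1)) (Set.Iio (m α - 1)))
    (s : ∀ α, Fin (p α)) (i : ℕ) (α : Fin k) {b : ℕ} (hb : b < m α) :
    outerPhase p m lam s (stepPos p m π α b i) = outerPhase p m lam s i := by
  unfold stepPos
  split_ifs with h
  · rfl
  · unfold outerPhase
    refine Finset.sum_congr rfl fun a _ => ?_
    rw [shift_digit_of_dvd (wt_pos hp _ _) (hp α)]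
    exact Or.inl ((wt_dvd_prod α ((hπ α).mapsTo (show b - 1 < m α - 1 by omega))).mul_right _)

lemma stepPos_sub {t₁ t₂ γ : ∀ α, Fin (p α)} {i j : ℕ} {α : Fin k} {b : ℕ} (hb : b < m α)
    (h : pathVal p m π t₁ γ i α b = pathVal p m π t₂ γ j α b) :
    (stepPos p m π α b j : ℤ) - stepPos p m π α b i = j - i := by
  unfold stepPos
  split_ifs with h0
  · rfl
  · apply shift_sub_shift
    simpa [pathVal, h0, hb] using h

/-- Incrementing an outer coordinate does not affect the path values. -/
lemma pathVal_shift_outer (hp : ∀ α, 0 < p α)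
    (hπ : ∀ α, Set.BijOn (π α) (Set.Iio (m α - 1)) (Set.Iio (m α - 1)))
    (t γ : ∀ α, Fin (p α)) (i : ℕ) (α : Fin k) :
    pathVal p m π t γ (shift (outerWt p m α) (p α) i) = pathVal p m π t γ i := by
  funext a b
  unfold pathVal
  split_ifs with h1 h2
  · rfl
  · refine shift_digit_of_dvd (outerWt_pos hp _) (hp α) (Or.inr ?_) i
    exact (wt_dvd_prod a ((hπ a).mapsTo (show b - 1 < m a - 1 by omega))).mul_right _
  · rfl

lemma outerPhase_shift (hp : ∀ α, 0 < p α) (hlam : 0 < lam) (hdvd : ∀ α, p α ∣ lam)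
    (s : ∀ α, Fin (p α)) (i : ℕ) (α : Fin k) :
    outerPhase p m lam s (shift (outerWt p m α) (p α) i)
      = ((lam / p α : ℕ) : ZMod lam) * ((s α : ℕ) : ZMod lam) + outerPhase p m lam s i := by
  unfold outerPhase
  have key : ∀ a ∈ Finset.univ, ((lam / p a : ℕ) : ZMod lam)
        * ((shift (outerWt p m α) (p α) i / outerWt p m a % p a : ℕ) : ZMod lam)
        * ((s a : ℕ) : ZMod lam)
      = (if a = α then ((lam / p α : ℕ) : ZMod lam) * ((s α : ℕ) : ZMod lam) else 0)
        + ((lam / p a : ℕ) : ZMod lam) * ((i / outerWt p m a % p a : ℕ) : ZMod lam)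
        * ((s a : ℕ) : ZMod lam) := by
    intro a _
    by_cases h : a = α
    · subst h
      rw [shift_digit (outerWt_pos hp _), if_pos rfl,
        (div_mul_cast_eq_iff hlam (hdvd a) _ (i / outerWt p m a % p a + 1)).2 (Nat.mod_modEq _ _)]
      push_cast
      ring
    · rw [shift_digit_of_dvd (outerWt_pos hp _) (hp α), if_neg h, zero_add]
      unfold outerWt
      rw [mul_assoc, mul_assoc, ← partProd_succ, ← partProd_succ]
      rcases lt_or_gt_of_ne h with h | h
      · exact Or.inr (Nat.mul_dvd_mul_left _ (partProd_dvd _ h))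
      · exact Or.inl (Nat.mul_dvd_mul_left _ (partProd_dvd _ h))
  rw [Finset.sum_congr rfl key, Finset.sum_add_distrib, Finset.sum_ite_eq', if_pos (mem_univ α)]

/-- The summand of the code correlation at the row `x.1` and the pair of positions `x.2`. -/
noncomputable def corrTerm (p m : Fin k → ℕ) (lam : ℕ) [NeZero lam] (π : Fin k → ℕ → ℕ)
    (c : Fin k → ℕ → ZMod lam) (c' : Fin k → ZMod lam) (s₁ s₂ t₁ t₂ : ∀ α, Fin (p α)) (τ : ℤ)
    (x : (∀ α, Fin (p α)) × ℕ × ℕ) : ℂ :=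
  if (x.2.2 : ℤ) - x.2.1 = τ then
    ZMod.stdAddChar (aFun p m lam π c c' s₁ t₁ x.1 x.2.1 - aFun p m lam π c c' s₂ t₂ x.1 x.2.2)
  else 0

/-- All rows and all pairs of positions in a sequence of length `L = ∏ p_α ^ m_α`. -/
def corrDom (p m : Fin k → ℕ) : Finset ((∀ α, Fin (p α)) × ℕ × ℕ) :=
  Finset.univ ×ˢ (range (∏ α, p α ^ m α) ×ˢ range (∏ α, p α ^ m α))

lemma sum_accf_eq_s7 [NeZero lam] (s₁ s₂ t₁ t₂ : ∀ α, Fin (p α)) (τ : ℤ) :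
    ∑ γ : ∀ α, Fin (p α), accf (∏ α, p α ^ (m α)) (seqC lam (aFun p m lam π c c' s₁ t₁ γ))
        (seqC lam (aFun p m lam π c c' s₂ t₂ γ)) τ
      = ∑ x ∈ corrDom p m, corrTerm p m lam π c c' s₁ s₂ t₁ t₂ τ x := by
  rw [corrDom, Finset.sum_product]
  refine Finset.sum_congr rfl fun γ _ => ?_
  rw [Finset.sum_product, accf_eq_sum]
  refine Finset.sum_congr rfl fun i _ => Finset.sum_congr rfl fun j _ => ?_
  rw [seqC_mul_conj, corrTerm]

lemma stdAddChar_ne_one_s7 [NeZero lam] (hlam : 0 < lam) {q : ℕ} (hq : q ∣ lam) {a b : ℕ}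
    (ha : a < q) (hb : b < q) (hab : a ≠ b) :
    ZMod.stdAddChar (((lam / q : ℕ) : ZMod lam) * ((a : ZMod lam) - (b : ZMod lam))) ≠ (1 : ℂ) := by
  intro h
  rw [← (ZMod.stdAddChar (N := lam)).map_zero_eq_one, ZMod.injective_stdAddChar.eq_iff,
    mul_sub, sub_eq_zero, div_mul_cast_eq_iff hlam hq] at h
  exact hab (by rwa [Nat.ModEq, Nat.mod_eq_of_lt ha, Nat.mod_eq_of_lt hb] at h)

/-- The pairs of positions whose path values disagree somewhere contribute nothing: if position
`b + 1` is the first disagreement in some block, incrementing the common value at position `b`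
twists the summand by `ω ^ ((λ / p_α) (y¹_{b+1} - y²_{b+1})) ≠ 1`. The hypothesis `H` takes care
of the pairs whose path values all agree. -/
lemma sum_corrTerm_eq_zero [NeZero lam] (hp : ∀ α, 0 < p α) (hm : ∀ α, 2 ≤ m α) (hlam : 0 < lam)
    (hdvd : ∀ α, p α ∣ lam)
    (hπ : ∀ α, Set.BijOn (π α) (Set.Iio (m α - 1)) (Set.Iio (m α - 1)))
    (s₁ s₂ t₁ t₂ : ∀ α, Fin (p α)) (τ : ℤ)
    (H : ∃ (σ : (∀ α, Fin (p α)) × ℕ × ℕ → (∀ α, Fin (p α)) × ℕ × ℕ)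
        (ζ : (∀ α, Fin (p α)) × ℕ × ℕ → ℂ), Set.InjOn σ (corrDom p m) ∧ ∀ x ∈ corrDom p m,
      pathVal p m π t₁ x.1 x.2.1 = pathVal p m π t₂ x.1 x.2.2 →
      σ x ∈ corrDom p m ∧
      pathVal p m π t₁ (σ x).1 (σ x).2.1 = pathVal p m π t₂ (σ x).1 (σ x).2.2 ∧
      ζ (σ x) = ζ x ∧
      corrTerm p m lam π c c' s₁ s₂ t₁ t₂ τ (σ x)
        = ζ x * corrTerm p m lam π c c' s₁ s₂ t₁ t₂ τ x ∧
      (corrTerm p m lam π c c' s₁ s₂ t₁ t₂ τ x ≠ 0 → ζ x ≠ 1)) :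
    ∑ x ∈ corrDom p m, corrTerm p m lam π c c' s₁ s₂ t₁ t₂ τ x = 0 := by
  set Y₁ : (∀ α, Fin (p α)) × ℕ × ℕ → Fin k → ℕ → ℕ :=
    fun x => pathVal p m π t₁ x.1 x.2.1 with hY₁
  set Y₂ : (∀ α, Fin (p α)) × ℕ × ℕ → Fin k → ℕ → ℕ :=
    fun x => pathVal p m π t₂ x.1 x.2.2 with hY₂
  refine sum_eq_zero_of_twist_s7 (corrDom p m) _ (fun x a e => Y₁ x a e = Y₂ x a e) fun κ => ?_
  by_cases hne : ∃ x₀ ∈ corrDom p m, (fun a e => Y₁ x₀ a e = Y₂ x₀ a e) = κ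
  swap
  · exact ⟨id, 0, Function.injective_id.injOn, fun x hx h => absurd ⟨x, hx, h⟩ hne⟩
  obtain ⟨x₀, hx₀, rfl⟩ := hne
  by_cases hag : ∀ a e, Y₁ x₀ a e = Y₂ x₀ a e
  · obtain ⟨σ, ζ, hσ, H⟩ := H
    refine ⟨σ, ζ, hσ, fun x hx h => ?_⟩
    have hx' : Y₁ x = Y₂ x := by
      funext a e
      have := congrFun (congrFun h a) e
      exact this.mpr (hag a e)
    obtain ⟨h1, h2, h3⟩ := H x hx hx'
    refine ⟨h1, ?_, h3⟩
    funext a e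
    exact propext ⟨fun _ => hag a e, fun _ => congrFun (congrFun h2 a) e⟩
  · push Not at hag
    obtain ⟨α, hα⟩ := hag
    classical
    have hmin := fun e => Nat.find_min hα (m := e)
    have hfind := Nat.find_spec hα
    set d := Nat.find hα
    have hd0 : d ≠ 0 := by
      intro h0
      apply hfind
      simp [hY₁, hY₂, pathVal, h0]
    obtain ⟨b, hb⟩ := Nat.exists_eq_succ_of_ne_zero hd0
    have hbm : b < m α := by
      by_contra hcon
      apply hmin (m α) (by omega)
      have hm0 : m α ≠ 0 := by have := hm α; omega
      have hd' : ¬ d < m α := by omega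
      simpa [hY₁, hY₂, pathVal, hm0, hd0, hd'] using hfind
    rw [hb] at hfind
    refine ⟨fun x => (stepRow p α b x.1, stepPos p m π α b x.2.1, stepPos p m π α b x.2.2),
      fun x => ZMod.stdAddChar (((lam / p α : ℕ) : ZMod lam)
        * ((Y₁ x α (b + 1) : ZMod lam) - (Y₂ x α (b + 1) : ZMod lam))), ?_, ?_⟩
    · apply Function.Injective.injOn
      rintro ⟨γ, i, j⟩ ⟨γ', i', j'⟩ h
      simp only [Prod.mk.injEq] at h ⊢
      exact ⟨stepRow_injective α b h.1, stepPos_injective hp α b h.2.1,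
        stepPos_injective hp α b h.2.2⟩
    rintro ⟨γ, i, j⟩ hx hκ
    have hpat : ∀ a e, Y₁ (γ, i, j) a e = Y₂ (γ, i, j) a e ↔ Y₁ x₀ a e = Y₂ x₀ a e :=
      fun a e => Eq.to_iff (congrFun (congrFun hκ a) e)
    have hagree : ∀ e ≤ b, Y₁ (γ, i, j) α e = Y₂ (γ, i, j) α e := fun e he =>
      (hpat α e).2 (not_not.1 (hmin e (by omega)))
    have hdis : Y₁ (γ, i, j) α (b + 1) ≠ Y₂ (γ, i, j) α (b + 1) := fun h =>
      hfind ((hpat α (b + 1)).1 h)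
    have e1 : Y₁ (stepRow p α b γ, stepPos p m π α b i, stepPos p m π α b j)
        = bump p α b (Y₁ (γ, i, j)) := pathVal_step hp hπ t₁ γ i α hbm
    have e2 : Y₂ (stepRow p α b γ, stepPos p m π α b i, stepPos p m π α b j)
        = bump p α b (Y₂ (γ, i, j)) := pathVal_step hp hπ t₂ γ j α hbm
    simp only [corrDom, mem_product, mem_univ, mem_range, true_and] at hx
    refine ⟨?_, ?_, ?_, ?_, fun _ => ?_⟩
    · simp only [corrDom, mem_product, mem_univ, mem_range, true_and]
      exact ⟨stepPos_lt hp hm hπ α hbm hx.1, stepPos_lt hp hm hπ α hbm hx.2⟩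
    · rw [← hκ]
      funext a e
      simp only [e1, e2]
      unfold bump
      split_ifs with h
      · obtain ⟨rfl, rfl⟩ := h
        simp [hagree e le_rfl]
      · rfl
    · simp only [e1, e2]
      simp [bump]
    · have hsub := stepPos_sub hbm (hagree b le_rfl)
      simp only [corrTerm, hsub]
      split_ifs with hτ
      · rw [← AddChar.map_add_eq_mul]
        congr 1
        simp only [aFun_eq hm hπ, outerPhase_step hp hπ _ _ α hbm]
        have e3 := pathPhase_bump (c := c) (c' := c') (m := m) (π := π) hlam hdvd
          (Y₁ (γ, i, j)) (Y₂ (γ, i, j)) α hbm hagree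
        rw [← e1, ← e2] at e3
        simp only [hY₁, hY₂] at e3 ⊢
        linear_combination e3
      · simp
    · exact stdAddChar_ne_one_s7 hlam (hdvd α) (pathVal_lt hp _ _ _ _ _) (pathVal_lt hp _ _ _ _ _) hdis

/-- Where all path values agree, `t₁ = t₂` and the positions are congruent modulo `Z`. -/
lemma of_pathVal_eq (hm : ∀ α, 2 ≤ m α)
    (hπ : ∀ α, Set.BijOn (π α) (Set.Iio (m α - 1)) (Set.Iio (m α - 1)))
    {t₁ t₂ γ : ∀ α, Fin (p α)} {i j : ℕ}
    (h : pathVal p m π t₁ γ i = pathVal p m π t₂ γ j) :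
    t₁ = t₂ ∧ i % ∏ a, p a ^ (m a - 1) = j % ∏ a, p a ^ (m a - 1) := by
  constructor
  · funext α
    have hm0 : m α ≠ 0 := by have := hm α; omega
    have := congrFun (congrFun h α) (m α)
    simpa [pathVal, hm0, Fin.ext_iff] using this
  · apply mod_eq_of_digits
    intro α β hβ
    obtain ⟨b, hb, rfl⟩ := (hπ α).surjOn (show β ∈ Set.Iio (m α - 1) from hβ)
    have hb' : b + 1 < m α := by have : b < m α - 1 := hb; omega
    have := congrFun (congrFun h α) (b + 1)
    simpa [pathVal, hb'] using this

lemma eq_of_mod_eq {i j Z : ℕ} (h : i % Z = j % Z) (hlt : |(j : ℤ) - i| < Z) : i = j := by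
  have h1 : (Z : ℤ) ∣ (j : ℤ) - i := (Nat.modEq_iff_dvd).1 h
  have := Int.eq_zero_of_abs_lt_dvd h1 hlt
  omega

end correlation

/-- Theorem 1: the family `{C_{s,t}}` with rows `ψ(a_{s,t}^γ)`,
`γ ∈ ∏_α Z_{p_α}`, is an IGC code set with `K = (p_1⋯p_k)^2`, `M = p_1⋯p_k`,
`L = ∏_α p_α^{m_α}`, `Z = ∏_α p_α^{m_α-1}`: the code ACCF equals `M·L` at
`(s,t)` equal and `τ = 0`, vanishes for `0 < |τ| < Z` in the same code, vanishes
for `|τ| < Z` within a group (`t1 = t2`, `s1 ≠ s2`), and vanishes for all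
`|τ| < L` across distinct groups (`t1 ≠ t2`). -/
theorem igc_code_set (k : ℕ) (p m : Fin k → ℕ) (hp : ∀ α, (p α).Prime)
    (hm : ∀ α, 2 ≤ m α) (lam : ℕ) (hlam : 0 < lam) (hdvd : ∀ α, p α ∣ lam)
    (π : Fin k → ℕ → ℕ)
    (hπ : ∀ α, Set.BijOn (π α) (Set.Iio (m α - 1)) (Set.Iio (m α - 1)))
    (c : Fin k → ℕ → ZMod lam) (c' : Fin k → ZMod lam)
    (s1 s2 t1 t2 : ∀ α, Fin (p α)) (τ : ℤ) :
    (s1 = s2 ∧ t1 = t2 ∧ τ = 0 →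
      ∑ γ : ∀ α, Fin (p α),
          accf (∏ α, p α ^ (m α)) (seqC lam (aFun p m lam π c c' s1 t1 γ))
            (seqC lam (aFun p m lam π c c' s2 t2 γ)) τ = ∏ α, (p α : ℂ) ^ (m α + 1)) ∧
    (s1 = s2 ∧ t1 = t2 ∧ 0 < |τ| ∧ |τ| < ((∏ α, p α ^ (m α - 1) : ℕ) : ℤ) →
      ∑ γ : ∀ α, Fin (p α),
          accf (∏ α, p α ^ (m α)) (seqC lam (aFun p m lam π c c' s1 t1 γ))
            (seqC lam (aFun p m lam π c c' s2 t2 γ)) τ = 0) ∧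
    (s1 ≠ s2 ∧ t1 = t2 ∧ |τ| < ((∏ α, p α ^ (m α - 1) : ℕ) : ℤ) →
      ∑ γ : ∀ α, Fin (p α),
          accf (∏ α, p α ^ (m α)) (seqC lam (aFun p m lam π c c' s1 t1 γ))
            (seqC lam (aFun p m lam π c c' s2 t2 γ)) τ = 0) ∧
    (t1 ≠ t2 ∧ |τ| < ((∏ α, p α ^ (m α) : ℕ) : ℤ) →
      ∑ γ : ∀ α, Fin (p α),
          accf (∏ α, p α ^ (m α)) (seqC lam (aFun p m lam π c c' s1 t1 γ))
            (seqC lam (aFun p m lam π c c' s2 t2 γ)) τ = 0) := by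
  have hp0 : ∀ α, 0 < p α := fun α => (hp α).pos
  have : NeZero lam := ⟨hlam.ne'⟩
  simp only [sum_accf_eq_s7]
  refine ⟨?_, ?_, ?_, ?_⟩
  · rintro ⟨rfl, rfl, rfl⟩
    rw [corrDom, Finset.sum_product]
    have hrow : ∀ γ ∈ (Finset.univ : Finset (∀ α, Fin (p α))),
        ∑ y ∈ range (∏ α, p α ^ m α) ×ˢ range (∏ α, p α ^ m α),
          corrTerm p m lam π c c' s1 s1 t1 t1 0 (γ, y) = ((∏ α, p α ^ m α : ℕ) : ℂ) := by
      intro γ _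
      rw [Finset.sum_product]
      have hin : ∀ i ∈ range (∏ α, p α ^ m α), ∑ j ∈ range (∏ α, p α ^ m α),
          corrTerm p m lam π c c' s1 s1 t1 t1 0 (γ, i, j) = 1 := by
        intro i hi
        rw [Finset.sum_eq_single_of_mem i hi]
        · simp [corrTerm]
        · intro j _ hji
          rw [corrTerm, if_neg]
          simp only
          omega
      rw [Finset.sum_congr rfl hin]
      simp
    rw [Finset.sum_congr rfl hrow, Finset.sum_const, Finset.card_univ, Fintype.card_pi]
    simp only [Fintype.card_fin, nsmul_eq_mul]
    push_cast
    rw [← Finset.prod_mul_distrib]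
    exact Finset.prod_congr rfl fun α _ => (pow_succ' _ _).symm
  · rintro ⟨-, -, h0, hZ⟩
    refine sum_corrTerm_eq_zero hp0 hm hlam hdvd hπ _ _ _ _ _
      ⟨id, 0, Function.injective_id.injOn, fun x hx h => ?_⟩
    have hz : corrTerm p m lam π c c' s1 s2 t1 t2 τ x = 0 := by
      rw [corrTerm, if_neg]
      rintro rfl
      have := eq_of_mod_eq (of_pathVal_eq hm hπ h).2 hZ
      simp [this] at h0
    exact ⟨hx, h, rfl, by simp [hz], fun hc => absurd hz hc⟩
  · rintro ⟨hs, rfl, hZ⟩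
    obtain ⟨α, hα⟩ := Function.ne_iff.1 hs
    refine sum_corrTerm_eq_zero hp0 hm hlam hdvd hπ _ _ _ _ _
      ⟨fun x => (x.1, shift (outerWt p m α) (p α) x.2.1, shift (outerWt p m α) (p α) x.2.2),
        fun _ => if τ = 0 then ZMod.stdAddChar (((lam / p α : ℕ) : ZMod lam)
          * (((s1 α : ℕ) : ZMod lam) - ((s2 α : ℕ) : ZMod lam))) else 0, ?_, ?_⟩
    · apply Function.Injective.injOn
      rintro ⟨γ, i, j⟩ ⟨γ', i', j'⟩ h
      simp only [Prod.mk.injEq] at h ⊢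
      exact ⟨h.1, shift_injective (outerWt_pos hp0 α) (hp0 α) h.2.1,
        shift_injective (outerWt_pos hp0 α) (hp0 α) h.2.2⟩
    rintro ⟨γ, i, j⟩ hx h
    simp only [corrDom, mem_product, mem_univ, mem_range, true_and] at hx
    have h' : pathVal p m π t1 γ (shift (outerWt p m α) (p α) i)
        = pathVal p m π t1 γ (shift (outerWt p m α) (p α) j) := by
      rw [pathVal_shift_outer hp0 hπ, pathVal_shift_outer hp0 hπ]
      exact h
    refine ⟨?_, h', rfl, ?_, fun _ => ?_⟩
    · simp only [corrDom, mem_product, mem_univ, mem_range, true_and]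
      exact ⟨shift_lt (outerWt_pos hp0 α) (hp0 α) (outerWt_dvd_length hm α) hx.1,
        shift_lt (outerWt_pos hp0 α) (hp0 α) (outerWt_dvd_length hm α) hx.2⟩
    · by_cases hij : i = j
      · subst hij
        simp only [corrTerm, sub_self]
        by_cases hτ : τ = 0
        · subst hτ
          simp only [if_true]
          rw [← AddChar.map_add_eq_mul]
          congr 1
          simp only [aFun_eq hm hπ, outerPhase_shift hp0 hlam hdvd,
            pathVal_shift_outer hp0 hπ]
          ring
        · simp [hτ, Ne.symm hτ]
      · -- unequal positions with equal inner digits differ by at least `Z`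
        have hz : corrTerm p m lam π c c' s1 s2 t1 t1 τ (γ, i, j) = 0 := by
          rw [corrTerm, if_neg]
          rintro rfl
          exact hij (eq_of_mod_eq (of_pathVal_eq hm hπ h).2 hZ)
        rw [hz, mul_zero, corrTerm, if_neg]
        rintro rfl
        exact hij (shift_injective (outerWt_pos hp0 α) (hp0 α)
          (eq_of_mod_eq (of_pathVal_eq hm hπ h').2 hZ))
    · dsimp only
      split_ifs
      · exact stdAddChar_ne_one_s7 hlam (hdvd α) (s1 α).2 (s2 α).2 fun e => hα (Fin.ext e)
      · exact zero_ne_one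
  · rintro ⟨ht, -⟩
    exact sum_corrTerm_eq_zero hp0 hm hlam hdvd hπ _ _ _ _ _
      ⟨id, 0, Function.injective_id.injOn, fun x _ h => absurd (of_pathVal_eq hm hπ h).1 ht⟩
end
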